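/- There exists an absolute constant γ₀ > 0 such that for every constant ε ∈ (0,1) and every ρ > 0 there exists m₀ such that for all m ≥ m₀ and all r with 1 ≤ r ≤ γ₀·m the following holds. Set K = ⌊(1-ε)·binom(m,≤r)⌋ and let Z = {z₁,…,z_K} be a uniformly random K-element subset of F₂^m. Then with probability at least 1 - ρ, the evaluation vectors z₁^{(r)}, …, z_K^{(r)} are linearly independent over F₂. -/

import Mathlib

/-- `binomLe m r = ∑_{i=0}^r C(m,i)`, written `binom(m, ≤ r)`. -/
def binomLe (m r : ℕ) : ℕ := ∑ i ∈ Finset.range (r + 1), Nat.choose m i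

/-- Index type for multilinear monomials of degree at most `r` in `m` variables:
subsets `S ⊆ {1,…,m}` with `|S| ≤ r`. -/
abbrev MonIdx (m r : ℕ) := {S : Finset (Fin m) // S.card ≤ r}

/-- `RM(m,r)` as the space of coefficient vectors of multilinear polynomials in `m`
variables of total degree at most `r` over `F₂`. -/
abbrev RMcode (m r : ℕ) := MonIdx m r → ZMod 2

/-- Evaluation of a polynomial (given by its coefficients) at the point `z`,
as a linear map: `c ↦ ∑_{|S| ≤ r} c_S ∏_{i ∈ S} z_i`. -/
def evalLin (m r : ℕ) (z : Fin m → ZMod 2) : RMcode m r →ₗ[ZMod 2] ZMod 2 :=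
  ∑ S : MonIdx m r, (∏ i ∈ S.1, z i) • LinearMap.proj S

/-- The degree-`r` vanishing space `I_r(Z)` of the set `Z ⊆ F₂^m`. -/
def vanishing (m r : ℕ) (Z : Set (Fin m → ZMod 2)) : Submodule (ZMod 2) (RMcode m r) :=
  ⨅ z ∈ Z, LinearMap.ker (evalLin m r z)

/-- The vector `z^{(r)}` of evaluations at `z` of all multilinear monomials of degree `≤ r`. -/
def monVec (m r : ℕ) (z : Fin m → ZMod 2) : MonIdx m r → ZMod 2 := fun S => ∏ i ∈ S.1, z i

/-- Fractional Hamming weight of the polynomial with coefficients `c`. -/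
noncomputable def wt (m r : ℕ) (c : RMcode m r) : ℝ :=
  ((Finset.univ.filter (fun z : Fin m → ZMod 2 => evalLin m r z c ≠ 0)).card : ℝ) / 2 ^ m

/-- The number of zeros in `F₂^m` of the polynomial with coefficients `c`,
i.e. `(1 - wt(P)) · 2^m`. -/
def numZeros (m r : ℕ) (c : RMcode m r) : ℕ :=
  (Finset.univ.filter (fun z : Fin m → ZMod 2 => evalLin m r z c = 0)).card

/-- The degree-`r` closure of `Z ⊆ F₂^m`. -/
def closureSet (m r : ℕ) (Z : Set (Fin m → ZMod 2)) : Set (Fin m → ZMod 2) :=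
  {u | ∀ c ∈ vanishing m r Z, evalLin m r u c = 0}

section RandomEvaluation

open Finset

/-- The space of functions on `F₂^m` represented by polynomials of degree at most `r`. -/
def polySpace (m r : ℕ) : Submodule (ZMod 2) ((Fin m → ZMod 2) → ZMod 2) :=
  Submodule.span (ZMod 2)
    ((fun (S : Finset (Fin m)) (z : Fin m → ZMod 2) => ∏ i ∈ S, z i) '' {S | S.card ≤ r})

section Algebra

variable {m n r s : ℕ}

lemma monomial_mem_polySpace {S : Finset (Fin m)} (h : S.card ≤ r) :
    (fun z : Fin m → ZMod 2 => ∏ i ∈ S, z i) ∈ polySpace m r :=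
  Submodule.subset_span ⟨S, h, rfl⟩

lemma polySpace_mono (h : r ≤ s) : polySpace m r ≤ polySpace m s :=
  Submodule.span_mono (Set.image_mono fun _ hS => le_trans hS h)

lemma const_mem_polySpace (a : ZMod 2) : (fun _ : Fin m → ZMod 2 => a) ∈ polySpace m r := by
  have h := (polySpace m r).smul_mem a (monomial_mem_polySpace (r := r) (S := ∅) (by simp))
  simpa [Pi.smul_def] using h

lemma coord_mem_polySpace (i : Fin m) : (fun z : Fin m → ZMod 2 => z i) ∈ polySpace m 1 := by
  simpa using monomial_mem_polySpace (r := 1) (S := {i}) (by simp)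

lemma zmod_two_mul_self (a : ZMod 2) : a * a = a := by
  revert a; decide

lemma monomial_mul_monomial (S T : Finset (Fin m)) (z : Fin m → ZMod 2) :
    (∏ i ∈ S, z i) * ∏ i ∈ T, z i = ∏ i ∈ S ∪ T, z i := by
  classical
  induction S using Finset.induction_on with
  | empty => simp
  | insert a S ha ih =>
    rw [Finset.prod_insert ha, mul_assoc, ih, Finset.insert_union]
    by_cases h : a ∈ S ∪ T
    · rw [Finset.insert_eq_of_mem h, ← Finset.mul_prod_erase _ _ h, ← mul_assoc, zmod_two_mul_self]
    · rw [Finset.prod_insert h]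

lemma mul_mem_polySpace {f g : (Fin m → ZMod 2) → ZMod 2} (hf : f ∈ polySpace m r)
    (hg : g ∈ polySpace m s) : f * g ∈ polySpace m (r + s) := by
  classical
  induction hf, hg using Submodule.span_induction₂ with
  | mem_mem x y hx hy =>
    obtain ⟨S, hS, rfl⟩ := hx
    obtain ⟨T, hT, rfl⟩ := hy
    have : (fun z : Fin m → ZMod 2 => ∏ i ∈ S ∪ T, z i) ∈ polySpace m (r + s) :=
      monomial_mem_polySpace ((Finset.card_union_le S T).trans (add_le_add hS hT))
    convert this using 1
    ext z
    exact monomial_mul_monomial S T z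
  | zero_left y hy => simp
  | zero_right x hx => simp
  | add_left x y z _ _ _ h1 h2 => rw [add_mul]; exact add_mem h1 h2
  | add_right x y z _ _ _ h1 h2 => rw [mul_add]; exact add_mem h1 h2
  | smul_left a x y _ _ h => rw [smul_mul_assoc]; exact Submodule.smul_mem _ _ h
  | smul_right a x y _ _ h => rw [mul_smul_comm]; exact Submodule.smul_mem _ _ h

lemma prod_mem_polySpace {ι : Type*} (S : Finset ι) (g : ι → (Fin m → ZMod 2) → ZMod 2)
    (hg : ∀ i ∈ S, g i ∈ polySpace m 1) : ∏ i ∈ S, g i ∈ polySpace m S.card := by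
  classical
  induction S using Finset.induction_on with
  | empty => simpa [Pi.one_def] using const_mem_polySpace (m := m) (r := 0) 1
  | insert a S ha ih =>
    rw [Finset.prod_insert ha, Finset.card_insert_of_notMem ha, add_comm]
    exact mul_mem_polySpace (hg a (by simp)) (ih fun i hi => hg i (by simp [hi]))

/-- Substituting polynomials of degree one does not raise the degree. -/
lemma comp_mem_polySpace {f : (Fin n → ZMod 2) → ZMod 2} (hf : f ∈ polySpace n r)
    (A : (Fin m → ZMod 2) → Fin n → ZMod 2) (hA : ∀ i, (fun z => A z i) ∈ polySpace m 1) :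
    (fun z => f (A z)) ∈ polySpace m r := by
  induction hf using Submodule.span_induction with
  | mem x hx =>
    obtain ⟨S, hS, rfl⟩ := hx
    have h := polySpace_mono hS (prod_mem_polySpace S (fun i z => A z i) fun i _ => hA i)
    convert h using 1
    ext z
    simp
  | zero => exact (polySpace m r).zero_mem
  | add x y _ _ h1 h2 => exact (polySpace m r).add_mem h1 h2
  | smul a x _ h => exact (polySpace m r).smul_mem a h

lemma translate_mem_polySpace {f : (Fin m → ZMod 2) → ZMod 2} (hf : f ∈ polySpace m r)
    (w : Fin m → ZMod 2) : (fun z => f (z + w)) ∈ polySpace m r :=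
  comp_mem_polySpace hf (fun z => z + w) fun i =>
    (polySpace m 1).add_mem (coord_mem_polySpace i) (const_mem_polySpace (w i))

lemma linear_comp_mem_polySpace {f : (Fin n → ZMod 2) → ZMod 2} (hf : f ∈ polySpace n r)
    (L : (Fin m → ZMod 2) →ₗ[ZMod 2] Fin n → ZMod 2) : (fun z => f (L z)) ∈ polySpace m r := by
  refine comp_mem_polySpace hf L fun i => ?_
  have h : (fun z => L z i) = ∑ j, (L (Pi.single j 1) i) • fun z : Fin m → ZMod 2 => z j := by
    ext z
    conv_lhs => rw [LinearMap.pi_apply_eq_sum_univ L z]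
    simp only [Finset.sum_apply, Pi.smul_apply, smul_eq_mul]
    refine Finset.sum_congr rfl fun j _ => ?_
    have hj : (fun k => if j = k then (1 : ZMod 2) else 0) = Pi.single j 1 := by
      ext k
      simp [Pi.single_apply, eq_comm]
    rw [hj, mul_comm]
  rw [h]
  exact Submodule.sum_mem _ fun j _ => Submodule.smul_mem _ _ (coord_mem_polySpace j)

lemma zmod_two_add_self (a : ZMod 2) : a + a = 0 := CharTwo.add_self_eq_zero a

/-- Taking a discrete derivative lowers the degree. -/
lemma derivative_mem_polySpace {f : (Fin m → ZMod 2) → ZMod 2} (hf : f ∈ polySpace m (r + 1))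
    (w : Fin m → ZMod 2) : (fun z => f z + f (z + w)) ∈ polySpace m r := by
  classical
  induction hf using Submodule.span_induction with
  | mem x hx =>
    obtain ⟨S, hS, rfl⟩ := hx
    simp only [Set.mem_ofPred_eq] at hS
    induction S using Finset.induction_on generalizing r with
    | empty =>
      simp only [Finset.prod_empty, zmod_two_add_self]
      exact const_mem_polySpace 0
    | insert a S ha ih =>
      rw [Finset.card_insert_of_notMem ha] at hS
      have key : (fun z : Fin m → ZMod 2 => ∏ i ∈ insert a S, z i + ∏ i ∈ insert a S, (z + w) i)
          = (fun z => z a) * (fun z => ∏ i ∈ S, z i + ∏ i ∈ S, (z + w) i)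
            + w a • fun z => ∏ i ∈ S, (z + w) i := by
        ext z
        simp only [Finset.prod_insert ha, Pi.add_apply, Pi.mul_apply, Pi.smul_apply, smul_eq_mul]
        ring
      rw [key]
      refine add_mem ?_ (Submodule.smul_mem _ _ (translate_mem_polySpace
        (monomial_mem_polySpace (by omega)) w))
      cases r with
      | zero =>
        have : S = ∅ := Finset.card_eq_zero.mp (by omega)
        subst this
        have h0 : (fun z : Fin m → ZMod 2 => z a) *
            (fun z => ∏ i ∈ (∅ : Finset (Fin m)), z i + ∏ i ∈ (∅ : Finset (Fin m)), (z + w) i) = 0 := by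
          ext z
          simp [zmod_two_add_self]
        rw [h0]
        exact Submodule.zero_mem _
      | succ r =>
        rw [add_comm r 1]
        exact mul_mem_polySpace (coord_mem_polySpace a) (ih (by omega))
  | zero => simpa using const_mem_polySpace 0
  | add x y _ _ h1 h2 =>
    convert (polySpace m r).add_mem h1 h2 using 1
    ext z
    simp only [Pi.add_apply]
    ring
  | smul a x _ h =>
    convert (polySpace m r).smul_mem a h using 1
    ext z
    simp only [Pi.smul_apply, smul_eq_mul]
    ring

lemma derivative_mem_polySpace_pred {f : (Fin m → ZMod 2) → ZMod 2} (hf : f ∈ polySpace m r)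
    (w : Fin m → ZMod 2) : (fun z => f z + f (z + w)) ∈ polySpace m (r - 1) := by
  cases r with
  | zero => exact derivative_mem_polySpace (polySpace_mono (Nat.zero_le _) hf) w
  | succ r => exact derivative_mem_polySpace hf w

/-- The polynomial function with prescribed coefficients. -/
noncomputable def polyOfCoeffs (m r : ℕ) :
    (MonIdx m r → ZMod 2) →ₗ[ZMod 2] (Fin m → ZMod 2) → ZMod 2 :=
  Fintype.linearCombination (ZMod 2) (fun (S : MonIdx m r) z => monVec m r z S)

lemma polyOfCoeffs_apply (c : MonIdx m r → ZMod 2) (z : Fin m → ZMod 2) :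
    polyOfCoeffs m r c z = ∑ S, c S * ∏ i ∈ S.1, z i := by
  simp [polyOfCoeffs, Fintype.linearCombination_apply, monVec]

lemma range_polyOfCoeffs : LinearMap.range (polyOfCoeffs m r) = polySpace m r := by
  rw [polyOfCoeffs, Fintype.range_linearCombination, polySpace]
  congr 1
  ext f
  constructor
  · rintro ⟨S, rfl⟩
    exact ⟨S.1, S.2, rfl⟩
  · rintro ⟨S, hS, rfl⟩
    exact ⟨⟨S, hS⟩, rfl⟩

/-- The indicator vector of a set of coordinates. -/
def indicatorVec (S : Finset (Fin m)) : Fin m → ZMod 2 := fun i => if i ∈ S then 1 else 0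

lemma monomial_indicatorVec (S T : Finset (Fin m)) :
    ∏ i ∈ S, indicatorVec T i = if S ⊆ T then 1 else 0 := by
  unfold indicatorVec
  rw [Finset.prod_ite_zero]
  simp [Finset.subset_iff]

lemma coeffs_eq_zero {c : MonIdx m r → ZMod 2}
    (h : ∀ T : MonIdx m r, polyOfCoeffs m r c (indicatorVec T.1) = 0) : c = 0 := by
  have key : ∀ k, ∀ T : MonIdx m r, T.1.card = k → c T = 0 := by
    intro k
    induction k using Nat.strong_induction_on with
    | _ k ih =>
      intro T hT
      have h1 := h T
      rw [polyOfCoeffs_apply, Finset.sum_eq_single T] at h1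
      · simpa [monomial_indicatorVec] using h1
      · intro S _ hST
        rw [monomial_indicatorVec]
        split_ifs with hsub
        · have hlt : S.1.card < k := by
            rw [← hT]
            exact Finset.card_lt_card (hsub.ssubset_of_ne fun h => hST (Subtype.ext h))
          rw [ih _ hlt S rfl, zero_mul]
        · rw [mul_zero]
      · simp
  ext T
  exact key _ T rfl

lemma polyOfCoeffs_injective : Function.Injective (polyOfCoeffs m r) := by
  rw [← LinearMap.ker_eq_bot, LinearMap.ker_eq_bot']
  intro c hc
  exact coeffs_eq_zero fun T => by rw [hc]; rfl

/-- A polynomial of degree at most `r` vanishing on a translate of the Hamming ball of radius `r`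
is zero. -/
lemma eq_zero_of_vanish_on_ball {f : (Fin m → ZMod 2) → ZMod 2} (hf : f ∈ polySpace m r)
    (a : Fin m → ZMod 2) (h : ∀ T : MonIdx m r, f (indicatorVec T.1 + a) = 0) : f = 0 := by
  have h1 := translate_mem_polySpace hf a
  rw [← range_polyOfCoeffs] at h1
  obtain ⟨c, hc⟩ := h1
  have hc0 : c = 0 := coeffs_eq_zero fun T => by rw [hc]; exact h T
  rw [hc0, map_zero] at hc
  ext z
  have := congrFun hc (z - a)
  simpa using this.symm

lemma card_monIdx : Fintype.card (MonIdx m r) = binomLe m r := by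
  classical
  rw [Fintype.card_subtype, binomLe]
  have : (univ.filter fun S : Finset (Fin m) => S.card ≤ r)
      = (Finset.range (r + 1)).biUnion fun i => Finset.powersetCard i univ := by
    ext S
    simp [Finset.mem_powersetCard]
  rw [this, Finset.card_biUnion]
  · simp
  · intro i _ j _ hij
    exact Finset.pairwise_disjoint_powersetCard _ hij

open Classical in
/-- The polynomial functions of degree at most `r`, as a finite set. -/
noncomputable def polys (m r : ℕ) : Finset ((Fin m → ZMod 2) → ZMod 2) :=
  univ.filter (· ∈ polySpace m r)

lemma mem_polys {f : (Fin m → ZMod 2) → ZMod 2} : f ∈ polys m r ↔ f ∈ polySpace m r := by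
  simp [polys]

lemma card_polys : (polys m r).card = 2 ^ binomLe m r := by
  classical
  have : polys m r = univ.image (polyOfCoeffs m r) := by
    ext f
    rw [mem_polys, ← range_polyOfCoeffs]
    simp
  rw [this, Finset.card_image_of_injective _ polyOfCoeffs_injective, Finset.card_univ,
    Fintype.card_fun, card_monIdx, ZMod.card]

end Algebra

section Reduction

variable {m r K : ℕ}

/-- The bias `E[(-1)^f]` of a Boolean function. -/
noncomputable def bias (f : (Fin m → ZMod 2) → ZMod 2) : ℝ :=
  2 * ((univ.filter fun x => f x = 0).card : ℝ) / 2 ^ m - 1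

open Classical in
/-- The polynomial functions of degree at most `r` that vanish on `Z`. -/
noncomputable def vanishingPolys (m r : ℕ) (Z : Finset (Fin m → ZMod 2)) :
    Finset ((Fin m → ZMod 2) → ZMod 2) :=
  (polys m r).filter fun f => ∀ z ∈ Z, f z = 0

lemma card_polys_le_vanishing_mul (Z : Finset (Fin m → ZMod 2)) :
    (polys m r).card ≤ (vanishingPolys m r Z).card *
      ((polys m r).image fun f (z : {x // x ∈ Z}) => f z.1).card := by
  classical
  refine Finset.card_le_mul_card_image _ _ fun a ha => ?_
  obtain ⟨f₀, hf₀, rfl⟩ := Finset.mem_image.mp ha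
  refine Finset.card_le_card_of_injOn (fun f => f - f₀) ?_ fun f _ g _ h => sub_left_injective h
  intro f hf
  simp only [Finset.coe_filter, Set.mem_ofPred_eq] at hf
  simp only [vanishingPolys, Finset.coe_filter, Set.mem_ofPred_eq, mem_polys]
  refine ⟨sub_mem (mem_polys.mp hf.1) (mem_polys.mp hf₀), fun z hz => ?_⟩
  have := congrFun hf.2 ⟨z, hz⟩
  simpa [sub_eq_zero] using this

lemma two_pow_le_vanishing (Z : Finset (Fin m → ZMod 2)) :
    2 ^ binomLe m r ≤ (vanishingPolys m r Z).card * 2 ^ Z.card := by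
  classical
  rw [← card_polys]
  refine (card_polys_le_vanishing_mul Z).trans (Nat.mul_le_mul_left _ ?_)
  refine (Finset.card_le_univ _).trans ?_
  simp

lemma sum_smul_polys_eq_zero {Z : Finset (Fin m → ZMod 2)} {c : {x // x ∈ Z} → ZMod 2}
    (hc : ∑ z, c z • monVec m r z.1 = 0) {f : (Fin m → ZMod 2) → ZMod 2}
    (hf : f ∈ polySpace m r) : ∑ z, c z * f z.1 = 0 := by
  induction hf using Submodule.span_induction with
  | mem x hx =>
    obtain ⟨S, hS, rfl⟩ := hx
    have := congrFun hc ⟨S, hS⟩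
    simpa [monVec, Finset.sum_apply] using this
  | zero => simp
  | add x y _ _ h1 h2 => simp only [Pi.add_apply, mul_add, Finset.sum_add_distrib, h1, h2, add_zero]
  | smul a x _ h =>
    have : ∑ z, c z * (a • x) z.1 = a * ∑ z, c z * x z.1 := by
      rw [Finset.mul_sum]
      refine Finset.sum_congr rfl fun z _ => ?_
      simp only [Pi.smul_apply, smul_eq_mul]
      ring
    rw [this, h, mul_zero]

lemma two_pow_le_vanishing_of_dependent {Z : Finset (Fin m → ZMod 2)}
    (hZ : ¬ LinearIndependent (ZMod 2) (fun z : {x // x ∈ Z} => monVec m r z.1)) :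
    2 * 2 ^ binomLe m r ≤ (vanishingPolys m r Z).card * 2 ^ Z.card := by
  classical
  rw [Fintype.not_linearIndependent_iff] at hZ
  obtain ⟨c, hc, z₀, hz₀⟩ := hZ
  have hz1 : c z₀ = 1 := by
    revert hz₀
    generalize c z₀ = a
    revert a
    decide
  set I := (polys m r).image fun f (z : {x // x ∈ Z}) => f z.1 with hI
  have hIc : ∀ v ∈ I, ∑ z, c z * v z = 0 := by
    intro v hv
    obtain ⟨f, hf, rfl⟩ := Finset.mem_image.mp hv
    exact sum_smul_polys_eq_zero hc (mem_polys.mp hf)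
  have hdisj : Disjoint I (I.image fun v => v + Pi.single z₀ 1) := by
    rw [Finset.disjoint_left]
    intro v hv hv'
    obtain ⟨u, hu, rfl⟩ := Finset.mem_image.mp hv'
    have h1 := hIc _ hv
    simp only [Pi.add_apply, mul_add, Finset.sum_add_distrib, hIc u hu, zero_add] at h1
    rw [Finset.sum_eq_single z₀ (by intro z _ hz; simp [hz]) (by simp)] at h1
    simp [hz1] at h1
  have hcard : 2 * I.card ≤ 2 ^ Z.card := by
    have h2 : (I.image fun v => v + Pi.single z₀ 1).card = I.card :=
      Finset.card_image_of_injective _ (add_left_injective _)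
    have h3 := Finset.card_le_univ (I ∪ I.image fun v => v + Pi.single z₀ 1)
    rw [Finset.card_union_of_disjoint hdisj, h2] at h3
    simp only [Fintype.card_pi, ZMod.card, Finset.prod_const, Finset.card_univ,
      Fintype.card_coe] at h3
    omega
  calc 2 * 2 ^ binomLe m r = 2 * (polys m r).card := by rw [card_polys]
    _ ≤ 2 * ((vanishingPolys m r Z).card * I.card) :=
      Nat.mul_le_mul_left _ (card_polys_le_vanishing_mul Z)
    _ = (vanishingPolys m r Z).card * (2 * I.card) := by ring
    _ ≤ _ := Nat.mul_le_mul_left _ hcard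

lemma sum_card_vanishingPolys :
    ∑ Z ∈ Finset.powersetCard K univ, (vanishingPolys m r Z).card
      = ∑ f ∈ polys m r, (univ.filter fun x => f x = 0).card.choose K := by
  classical
  simp only [vanishingPolys, Finset.card_filter]
  rw [Finset.sum_comm]
  refine Finset.sum_congr rfl fun f _ => ?_
  rw [← Finset.card_filter, ← Finset.card_filter, ← Finset.card_powersetCard]
  congr 1
  ext Z
  simp only [Finset.mem_filter, Finset.mem_powersetCard, Finset.subset_iff, Finset.mem_univ,
    true_and]
  tauto

lemma choose_mul_pow_le {z M : ℕ} (h : z ≤ M) (K : ℕ) :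
    z.choose K * M ^ K ≤ M.choose K * z ^ K := by
  have key : z.descFactorial K * M ^ K ≤ M.descFactorial K * z ^ K := by
    induction K with
    | zero => simp
    | succ K ih =>
      rw [Nat.descFactorial_succ, Nat.descFactorial_succ, pow_succ, pow_succ]
      have h1 : (z - K) * M ≤ (M - K) * z := by
        rw [Nat.sub_mul, Nat.sub_mul, mul_comm M z]
        exact Nat.sub_le_sub_left (Nat.mul_le_mul_left K h) _
      calc (z - K) * z.descFactorial K * (M ^ K * M)
          = ((z - K) * M) * (z.descFactorial K * M ^ K) := by ring
        _ ≤ ((M - K) * z) * (M.descFactorial K * z ^ K) := Nat.mul_le_mul h1 ih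
        _ = _ := by ring
  rw [Nat.descFactorial_eq_factorial_mul_choose, Nat.descFactorial_eq_factorial_mul_choose,
    mul_assoc, mul_assoc] at key
  exact Nat.le_of_mul_le_mul_left key K.factorial_pos

lemma one_add_bias (f : (Fin m → ZMod 2) → ZMod 2) :
    1 + bias f = 2 * (((univ.filter fun x => f x = 0).card : ℝ) / 2 ^ m) := by
  rw [bias]; ring

lemma card_points : Fintype.card (Fin m → ZMod 2) = 2 ^ m := by simp

/-- A second moment bound on the number of vanishing polynomials implies that random evaluation
vectors are independent with high probability. -/
lemma independent_of_moment {ρ : ℝ}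
    (h : ∑ f ∈ polys m r, (1 + bias f) ^ K ≤ (1 + ρ) * 2 ^ binomLe m r) :
    (1 - ρ) * (Nat.card {Z : Finset (Fin m → ZMod 2) // Z.card = K} : ℝ)
      ≤ (Nat.card {Z : Finset (Fin m → ZMod 2) // Z.card = K ∧
          LinearIndependent (ZMod 2) (fun z : {x // x ∈ Z} => monVec m r z.1)} : ℝ) := by
  classical
  set N := binomLe m r
  set Q : Finset (Fin m → ZMod 2) → Prop := fun Z =>
    LinearIndependent (ZMod 2) (fun z : {x // x ∈ Z} => monVec m r z.1) with hQ
  set A := Finset.powersetCard K (univ : Finset (Fin m → ZMod 2)) with hA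
  have hAcard : A.card = (2 ^ m).choose K := by
    rw [hA, Finset.card_powersetCard, Finset.card_univ, card_points]
  have e1 : Nat.card {Z : Finset (Fin m → ZMod 2) // Z.card = K} = A.card := by
    rw [Nat.card_eq_fintype_card, Fintype.card_subtype]
    congr 1
    ext Z
    simp [hA, Finset.mem_powersetCard]
  have e2 : Nat.card {Z : Finset (Fin m → ZMod 2) // Z.card = K ∧ Q Z} = (A.filter Q).card := by
    rw [Nat.card_eq_fintype_card, Fintype.card_subtype]
    congr 1
    ext Z
    simp [hA, Finset.mem_powersetCard]
  rw [e1, e2]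
  have hsplit : ((A.filter Q).card : ℝ) + ((A.filter fun Z => ¬ Q Z).card : ℝ) = A.card := by
    exact_mod_cast Finset.card_filter_add_card_filter_not Q
  have lower : (2 : ℝ) ^ N * (A.card + (A.filter fun Z => ¬ Q Z).card)
      ≤ ∑ Z ∈ A, ((vanishingPolys m r Z).card : ℝ) * 2 ^ K := by
    have : (2 : ℝ) ^ N * (A.card + (A.filter fun Z => ¬ Q Z).card)
        = ∑ Z ∈ A, (2 : ℝ) ^ N * (1 + if ¬ Q Z then 1 else 0) := by
      rw [← Finset.mul_sum, Finset.sum_add_distrib, ← Finset.sum_filter]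
      simp
    rw [this]
    refine Finset.sum_le_sum fun Z hZ => ?_
    have hZK : Z.card = K := (Finset.mem_powersetCard.mp hZ).2
    by_cases hq : Q Z
    · have := two_pow_le_vanishing (r := r) Z
      rw [hZK] at this
      simp only [hq, not_true_eq_false, if_false, add_zero, mul_one]
      exact_mod_cast this
    · have := two_pow_le_vanishing_of_dependent hq
      rw [hZK] at this
      simp only [hq, not_false_eq_true, if_true]
      have h2 : (2 : ℝ) * 2 ^ N ≤ (vanishingPolys m r Z).card * 2 ^ K := by exact_mod_cast this
      linarith
  have upper : ∑ Z ∈ A, ((vanishingPolys m r Z).card : ℝ) * 2 ^ K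
      ≤ A.card * ∑ f ∈ polys m r, (1 + bias f) ^ K := by
    rw [← Finset.sum_mul, ← Nat.cast_sum, sum_card_vanishingPolys, Nat.cast_sum, Finset.sum_mul,
      Finset.mul_sum]
    refine Finset.sum_le_sum fun f _ => ?_
    have hz : (univ.filter fun x => f x = 0).card ≤ 2 ^ m := by
      rw [← card_points]; exact Finset.card_le_univ _
    have h1 := choose_mul_pow_le hz K
    rw [one_add_bias, mul_pow, div_pow, hAcard]
    have h2 : (((univ.filter fun x => f x = 0).card.choose K : ℕ) : ℝ) * ((2 : ℝ) ^ m) ^ K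
        ≤ ((2 ^ m).choose K : ℕ) * ((univ.filter fun x => f x = 0).card : ℝ) ^ K := by
      exact_mod_cast h1
    have hM : (0 : ℝ) < ((2 : ℝ) ^ m) ^ K := by positivity
    have h3 := (le_div_iff₀ hM).mpr h2
    calc _ ≤ ((2 ^ m).choose K : ℕ) * ((univ.filter fun x => f x = 0).card : ℝ) ^ K
          / ((2 : ℝ) ^ m) ^ K * 2 ^ K := by gcongr
      _ = _ := by ring
  have hN : (0 : ℝ) < 2 ^ N := by positivity
  have h4 : (2 : ℝ) ^ N * (A.card + (A.filter fun Z => ¬ Q Z).card)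
      ≤ (2 : ℝ) ^ N * (A.card * (1 + ρ)) := by
    refine (lower.trans upper).trans ?_
    calc _ ≤ (A.card : ℝ) * ((1 + ρ) * 2 ^ N) := by gcongr
      _ = _ := by ring
  have h5 := le_of_mul_le_mul_left h4 hN
  linarith

end Reduction

section Counting

variable {m r : ℕ}

lemma sum_card_disagreements (f g : (Fin m → ZMod 2) → ZMod 2) :
    ∑ a : Fin m → ZMod 2,
        (univ.filter fun T : MonIdx m r => f (indicatorVec T.1 + a) ≠ g (indicatorVec T.1 + a)).card
      = binomLe m r * (univ.filter fun x => f x ≠ g x).card := by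
  classical
  simp only [Finset.card_filter]
  rw [Finset.sum_comm]
  have h : ∀ T : MonIdx m r, ∑ a : Fin m → ZMod 2,
      (if f (indicatorVec T.1 + a) ≠ g (indicatorVec T.1 + a) then 1 else 0)
      = ∑ x : Fin m → ZMod 2, if f x ≠ g x then 1 else 0 := fun T =>
    Fintype.sum_equiv (Equiv.addLeft (indicatorVec T.1)) _ _ fun a => rfl
  rw [Finset.sum_congr rfl fun T _ => h T, Finset.sum_const, Finset.card_univ, card_monIdx,
    smul_eq_mul]

lemma exists_translate_few_disagreements {f g : (Fin m → ZMod 2) → ZMod 2} {δ : ℝ}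
    (h : ((univ.filter fun x => f x ≠ g x).card : ℝ) ≤ δ * 2 ^ m) :
    ∃ a, ((univ.filter fun T : MonIdx m r =>
      f (indicatorVec T.1 + a) ≠ g (indicatorVec T.1 + a)).card : ℝ) ≤ δ * binomLe m r := by
  classical
  have h1 : ∑ a : Fin m → ZMod 2, ((univ.filter fun T : MonIdx m r =>
        f (indicatorVec T.1 + a) ≠ g (indicatorVec T.1 + a)).card : ℝ)
      ≤ ∑ _a : Fin m → ZMod 2, δ * binomLe m r := by
    rw [Finset.sum_const, Finset.card_univ, card_points, nsmul_eq_mul, ← Nat.cast_sum,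
      sum_card_disagreements]
    push_cast
    calc (binomLe m r : ℝ) * _ ≤ binomLe m r * (δ * 2 ^ m) := by gcongr
      _ = _ := by ring
  obtain ⟨a, -, ha⟩ := Finset.exists_le_of_sum_le Finset.univ_nonempty h1
  exact ⟨a, ha⟩

lemma card_small_subsets_le {ι : Type*} [Fintype ι] [DecidableEq ι] (t : ℝ) (ht : 0 ≤ t) (e : ℕ) :
    ((univ.filter fun D : Finset ι => (D.card : ℝ) ≤ t).card : ℝ)
      ≤ Real.exp (e * t + (1 / 2) ^ e * Fintype.card ι) := by
  have hL0 : (0 : ℝ) ≤ Real.log 2 := Real.log_nonneg (by norm_num)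
  have hL1 : Real.log 2 ≤ 1 := by linarith [Real.log_two_lt_d9]
  have hy : ((1 : ℝ) / 2) ^ e = Real.exp (-(e * Real.log 2)) := by
    rw [← mul_neg, ← Real.log_inv, Real.exp_nat_mul, Real.exp_log (by norm_num), one_div]
  calc ((univ.filter fun D : Finset ι => (D.card : ℝ) ≤ t).card : ℝ)
      = ∑ D : Finset ι, if (D.card : ℝ) ≤ t then (1 : ℝ) else 0 := by
        rw [Finset.card_filter]; push_cast; rfl
    _ ≤ ∑ D : Finset ι, Real.exp (e * t) * ((1 / 2 : ℝ) ^ e) ^ D.card := by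
        refine Finset.sum_le_sum fun D _ => ?_
        split_ifs with h
        · rw [hy, ← Real.exp_nat_mul, ← Real.exp_add]
          refine Real.one_le_exp ?_
          have h1 : (D.card : ℝ) * (e * Real.log 2) ≤ t * (e * 1) := by gcongr
          linarith
        · positivity
    _ = Real.exp (e * t) * (1 + (1 / 2 : ℝ) ^ e) ^ Fintype.card ι := by
        rw [← Finset.mul_sum]
        congr 1
        have := Fintype.sum_pow_mul_eq_add_pow ι ((1 / 2 : ℝ) ^ e) 1
        simp only [one_pow, mul_one] at this
        rw [this, add_comm]
    _ ≤ Real.exp (e * t) * Real.exp ((1 / 2 : ℝ) ^ e) ^ Fintype.card ι := by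
        gcongr
        rw [add_comm]
        exact Real.add_one_le_exp _
    _ = _ := by rw [← Real.exp_nat_mul, ← Real.exp_add, mul_comm (Fintype.card ι : ℝ)]

lemma zmod_two_sub_eq_zero : ∀ u v w : ZMod 2, (u ≠ w ↔ v ≠ w) → u - v = 0 := by
  decide

/-- The number of polynomials that are close to some member of a given family of functions. -/
lemma card_le_of_approx {F G : Finset ((Fin m → ZMod 2) → ZMod 2)} (hF : F ⊆ polys m r)
    {δ : ℝ} (hδ : 0 ≤ δ) (e : ℕ)
    (h : ∀ f ∈ F, ∃ g ∈ G, ((univ.filter fun x => f x ≠ g x).card : ℝ) ≤ δ * 2 ^ m) :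
    (F.card : ℝ) ≤ G.card * 2 ^ m * Real.exp ((e * δ + (1 / 2) ^ e) * binomLe m r) := by
  classical
  have h' : ∀ f : (Fin m → ZMod 2) → ZMod 2,
      ∃ p : ((Fin m → ZMod 2) → ZMod 2) × (Fin m → ZMod 2), f ∈ F → p.1 ∈ G ∧
        ((univ.filter fun T : MonIdx m r =>
          f (indicatorVec T.1 + p.2) ≠ p.1 (indicatorVec T.1 + p.2)).card : ℝ)
            ≤ δ * binomLe m r := by
    intro f
    by_cases hf : f ∈ F
    · obtain ⟨g, hg, hfg⟩ := h f hf
      obtain ⟨a, ha⟩ := exists_translate_few_disagreements (r := r) hfg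
      exact ⟨(g, a), fun _ => ⟨hg, ha⟩⟩
    · exact ⟨(0, 0), fun hf' => absurd hf' hf⟩
  choose p hp using h'
  set B := univ.filter fun D : Finset (MonIdx m r) => (D.card : ℝ) ≤ δ * binomLe m r with hB
  have hcard : F.card ≤ (G ×ˢ (univ : Finset (Fin m → ZMod 2)) ×ˢ B).card := by
    refine Finset.card_le_card_of_injOn (fun f => ((p f).1, (p f).2,
      univ.filter fun T : MonIdx m r =>
        f (indicatorVec T.1 + (p f).2) ≠ (p f).1 (indicatorVec T.1 + (p f).2))) ?_ ?_
    · intro f hf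
      have := hp f hf
      simp only [Finset.coe_product, Set.mem_prod, Finset.mem_coe, Finset.mem_univ, true_and, hB,
        Finset.mem_filter]
      exact this
    · intro f hf f' hf' heq
      simp only [Prod.mk.injEq] at heq
      obtain ⟨h1, h2, h3⟩ := heq
      rw [h1, h2] at h3
      have hsub : f - f' ∈ polySpace m r :=
        sub_mem (mem_polys.mp (hF hf)) (mem_polys.mp (hF hf'))
      refine sub_eq_zero.mp (eq_zero_of_vanish_on_ball hsub (p f').2 fun T => ?_)
      have hT := Finset.ext_iff.mp h3 T
      simp only [Finset.mem_filter, Finset.mem_univ, true_and] at hT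
      rw [Pi.sub_apply]
      exact zmod_two_sub_eq_zero _ _ _ hT
  rw [Finset.card_product, Finset.card_product, Finset.card_univ, card_points] at hcard
  have hBcard := card_small_subsets_le (ι := MonIdx m r) (δ * binomLe m r) (by positivity) e
  rw [card_monIdx] at hBcard
  calc (F.card : ℝ) ≤ ((G.card * (2 ^ m * B.card) : ℕ) : ℝ) := by exact_mod_cast hcard
    _ = G.card * 2 ^ m * B.card := by push_cast; ring
    _ ≤ G.card * 2 ^ m * Real.exp (e * (δ * binomLe m r) + (1 / 2) ^ e * binomLe m r) := by
        gcongr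
    _ = _ := by congr 2; ring

/-- Few polynomials of degree at most `r` have tiny weight. -/
lemma card_low_weight_le {F : Finset ((Fin m → ZMod 2) → ZMod 2)} (hF : F ⊆ polys m r)
    {δ : ℝ} (hδ : 0 ≤ δ) (e : ℕ)
    (h : ∀ f ∈ F, ((univ.filter fun x => f x ≠ 0).card : ℝ) ≤ δ * 2 ^ m) :
    (F.card : ℝ) ≤ 2 ^ m * Real.exp ((e * δ + (1 / 2) ^ e) * binomLe m r) := by
  have := card_le_of_approx (G := {0}) hF hδ e fun f hf => ⟨0, by simp, by simpa using h f hf⟩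
  simpa using this

/-- A function of small weight is well approximated by its iterated derivatives. -/
lemma exists_derivative_family {f : (Fin m → ZMod 2) → ZMod 2} (hf : f ∈ polySpace m r) (s : ℕ) :
    ∃ (J : Type) (_ : Fintype J) (_ : Nonempty J) (g : J → (Fin m → ZMod 2) → ZMod 2),
      (∀ j, g j ∈ polySpace m (r - s)) ∧
      ∀ x, (univ.filter fun j => g j x ≠ f x).card * 2 ^ m
        ≤ (2 ^ s - 1) * (univ.filter fun x => f x ≠ 0).card * Fintype.card J := by
  classical
  induction s with
  | zero => exact ⟨Unit, inferInstance, inferInstance, fun _ => f, fun _ => hf, by simp⟩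
  | succ s ih =>
    obtain ⟨J, _, _, g, hg, hgc⟩ := ih
    refine ⟨J × (Fin m → ZMod 2), inferInstance, inferInstance,
      fun p z => g p.1 z + g p.1 (z + p.2), fun p => ?_, fun x => ?_⟩
    · exact derivative_mem_polySpace_pred (hg p.1) p.2
    · set w := (univ.filter fun x => f x ≠ 0).card with hw
      have hsub : (univ.filter fun p : J × (Fin m → ZMod 2) => g p.1 x + g p.1 (x + p.2) ≠ f x)
          ⊆ ((univ.filter fun j => g j x ≠ f x) ×ˢ univ)
            ∪ ((univ ×ˢ univ.filter fun y => f (x + y) ≠ 0)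
            ∪ univ.filter fun p : J × (Fin m → ZMod 2) => g p.1 (x + p.2) ≠ f (x + p.2)) := by
        intro p hp
        simp only [Finset.mem_filter, Finset.mem_univ, true_and, Finset.mem_union,
          Finset.mem_product, and_true] at hp ⊢
        by_contra! hcon
        rw [hcon.1, hcon.2.2, hcon.2.1, add_zero] at hp
        exact hp rfl
      have h1 : (univ.filter fun y => f (x + y) ≠ 0).card = w :=
        Finset.card_equiv (Equiv.addLeft x) (by simp)
      have h2 : (univ.filter fun p : J × (Fin m → ZMod 2) =>
          g p.1 (x + p.2) ≠ f (x + p.2)).card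
          = ∑ y : Fin m → ZMod 2, (univ.filter fun j => g j y ≠ f y).card := by
        simp only [Finset.card_filter]
        rw [Fintype.sum_prod_type, Finset.sum_comm]
        exact Fintype.sum_equiv (Equiv.addLeft x) _ _ fun y => rfl
      have h3 : (∑ y : Fin m → ZMod 2, (univ.filter fun j => g j y ≠ f y).card) * 2 ^ m
          ≤ 2 ^ m * ((2 ^ s - 1) * w * Fintype.card J) := by
        rw [Finset.sum_mul]
        refine (Finset.sum_le_sum fun y _ => hgc y).trans ?_
        rw [Finset.sum_const, Finset.card_univ, card_points, smul_eq_mul]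
      have h4 := (Finset.card_le_card hsub).trans ((Finset.card_union_le _ _).trans
        (Nat.add_le_add_left (Finset.card_union_le _ _) _))
      rw [Finset.card_product, Finset.card_product, h1, h2, Finset.card_univ, Finset.card_univ,
        card_points] at h4
      have h5 : 2 ^ (s + 1) - 1 = 2 * (2 ^ s - 1) + 1 := by
        have := Nat.one_le_two_pow (n := s)
        rw [pow_succ]
        omega
      rw [Fintype.card_prod, card_points, h5]
      have h6 := hgc x
      generalize (2 ^ s - 1) = c at *
      calc _ ≤ _ := Nat.mul_le_mul_right (2 ^ m) h4
        _ = (univ.filter fun j => g j x ≠ f x).card * 2 ^ m * 2 ^ m + Fintype.card J * w * 2 ^ m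
            + (∑ y : Fin m → ZMod 2, (univ.filter fun j => g j y ≠ f y).card) * 2 ^ m := by ring
        _ ≤ c * w * Fintype.card J * 2 ^ m + Fintype.card J * w * 2 ^ m
            + 2 ^ m * (c * w * Fintype.card J) := by gcongr
        _ = _ := by ring

/-- A function of small weight is very well approximated by a product of two of its iterated
derivatives. -/
lemma exists_product_approx {f : (Fin m → ZMod 2) → ZMod 2} (hf : f ∈ polySpace m r) (s : ℕ)
    {δ : ℝ} (h : ((univ.filter fun x => f x ≠ 0).card : ℝ) ≤ δ * 2 ^ m) :
    ∃ g₁ ∈ polySpace m (r - s), ∃ g₂ ∈ polySpace m (r - s),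
      ((univ.filter fun x => f x ≠ (g₁ * g₂) x).card : ℝ) ≤ 3 * 4 ^ s * δ ^ 2 * 2 ^ m := by
  classical
  obtain ⟨J, _, _, g, hg, hgc⟩ := exists_derivative_family hf s
  have hM : (0 : ℝ) < 2 ^ m := by positivity
  have hδ : 0 ≤ δ := by
    by_contra hneg
    have : δ * 2 ^ m < 0 := mul_neg_of_neg_of_pos (not_le.mp hneg) hM
    have h0 : (0 : ℝ) ≤ ((univ.filter fun x => f x ≠ 0).card : ℝ) := by positivity
    linarith
  set p : ℝ := 2 ^ s * δ with hp
  set W := univ.filter fun x => f x ≠ 0 with hW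
  set n : ℝ := ((Fintype.card J : ℕ) : ℝ) with hn
  have hn0 : 0 ≤ n := by positivity
  have hbad : ∀ x, ((univ.filter fun j => g j x ≠ f x).card : ℝ) ≤ p * n := by
    intro x
    have h1 : ((univ.filter fun j => g j x ≠ f x).card : ℝ) * 2 ^ m ≤ (p * n) * 2 ^ m := by
      calc _ ≤ (((2 ^ s - 1) * W.card * Fintype.card J : ℕ) : ℝ) := by exact_mod_cast hgc x
        _ = ((2 ^ s - 1 : ℕ) : ℝ) * W.card * n := by push_cast; ring
        _ ≤ 2 ^ s * (δ * 2 ^ m) * n := by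
            gcongr
            have : (2 ^ s - 1 : ℕ) ≤ 2 ^ s := Nat.sub_le _ _
            exact_mod_cast this
        _ = _ := by rw [hp]; ring
    exact le_of_mul_le_mul_right h1 hM
  have key : ∀ x, ((univ.filter fun q : J × J => f x ≠ (g q.1 * g q.2) x).card : ℝ)
      ≤ (if f x ≠ 0 then 2 * p * n ^ 2 else 0) + p ^ 2 * n ^ 2 := by
    intro x
    set b := univ.filter fun j => g j x ≠ f x with hb
    split_ifs with hfx
    · have hsub : (univ.filter fun q : J × J => f x ≠ (g q.1 * g q.2) x)
          ⊆ (b ×ˢ univ) ∪ (univ ×ˢ b) := by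
        intro q hq
        simp only [hb, Finset.mem_filter, Finset.mem_univ, true_and, Finset.mem_union,
          Finset.mem_product, and_true] at hq ⊢
        by_contra! hcon
        rw [Pi.mul_apply, hcon.1, hcon.2, zmod_two_mul_self] at hq
        exact hq rfl
      have h1 := (Finset.card_le_card hsub).trans (Finset.card_union_le _ _)
      rw [Finset.card_product, Finset.card_product, Finset.card_univ] at h1
      have h2 : ((univ.filter fun q : J × J => f x ≠ (g q.1 * g q.2) x).card : ℝ)
          ≤ b.card * n + n * b.card := by rw [hn]; exact_mod_cast h1
      have h3 : (b.card : ℝ) * n ≤ p * n * n := by gcongr; exact hbad x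
      nlinarith [sq_nonneg (p * n)]
    · push Not at hfx
      have hsub : (univ.filter fun q : J × J => f x ≠ (g q.1 * g q.2) x) ⊆ b ×ˢ b := by
        intro q hq
        simp only [hb, hfx, Finset.mem_filter, Finset.mem_univ, true_and,
          Finset.mem_product, Pi.mul_apply] at hq ⊢
        constructor
        · intro h0; rw [h0, zero_mul] at hq; exact hq rfl
        · intro h0; rw [h0, mul_zero] at hq; exact hq rfl
      have h1 := Finset.card_le_card hsub
      rw [Finset.card_product] at h1
      have h2 : ((univ.filter fun q : J × J => f x ≠ (g q.1 * g q.2) x).card : ℝ)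
          ≤ b.card * b.card := by exact_mod_cast h1
      have h3 : (b.card : ℝ) * b.card ≤ (p * n) * (p * n) := by
        gcongr <;> exact hbad x
      nlinarith
  have hsum : ∑ q : J × J, ((univ.filter fun x => f x ≠ (g q.1 * g q.2) x).card : ℝ)
      ≤ ∑ _q : J × J, 3 * 4 ^ s * δ ^ 2 * 2 ^ m := by
    have hswap : ∑ q : J × J, ((univ.filter fun x => f x ≠ (g q.1 * g q.2) x).card : ℝ)
        = ∑ x, ((univ.filter fun q : J × J => f x ≠ (g q.1 * g q.2) x).card : ℝ) := by
      simp only [Finset.card_filter, Nat.cast_sum]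
      exact Finset.sum_comm
    rw [hswap]
    refine (Finset.sum_le_sum fun x _ => key x).trans ?_
    rw [Finset.sum_add_distrib, ← Finset.sum_filter, Finset.sum_const, Finset.sum_const,
      Finset.sum_const, Finset.card_univ, Finset.card_univ, card_points, Fintype.card_prod]
    simp only [nsmul_eq_mul, Nat.cast_mul, Nat.cast_pow, Nat.cast_ofNat]
    change (W.card : ℝ) * (2 * p * n ^ 2) + 2 ^ m * (p ^ 2 * n ^ 2)
      ≤ n * n * (3 * 4 ^ s * δ ^ 2 * 2 ^ m)
    have h4 : (4 : ℝ) ^ s = 2 ^ s * 2 ^ s := by rw [← mul_pow]; norm_num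
    have hs1 : (1 : ℝ) ≤ 2 ^ s := one_le_pow₀ (by norm_num)
    calc _ ≤ (δ * 2 ^ m) * (2 * p * n ^ 2) + 2 ^ m * (p ^ 2 * n ^ 2) := by gcongr
      _ = (2 * 1 * 2 ^ s + 2 ^ s * 2 ^ s) * (δ ^ 2 * 2 ^ m * n ^ 2) := by rw [hp]; ring
      _ ≤ (2 * 2 ^ s * 2 ^ s + 2 ^ s * 2 ^ s) * (δ ^ 2 * 2 ^ m * n ^ 2) := by gcongr
      _ = _ := by rw [h4]; ring
  obtain ⟨q, -, hq⟩ := Finset.exists_le_of_sum_le Finset.univ_nonempty hsum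
  exact ⟨g q.1, hg _, g q.2, hg _, hq⟩

/-- Counting polynomials of small weight through their derivatives of order `s`. -/
lemma card_small_weight_le {F : Finset ((Fin m → ZMod 2) → ZMod 2)} (hF : F ⊆ polys m r)
    (s e : ℕ) {δ : ℝ}
    (h : ∀ f ∈ F, ((univ.filter fun x => f x ≠ 0).card : ℝ) ≤ δ * 2 ^ m) :
    (F.card : ℝ) ≤ 4 ^ binomLe m (r - s) * 2 ^ m
      * Real.exp ((e * (3 * 4 ^ s * δ ^ 2) + (1 / 2) ^ e) * binomLe m r) := by
  classical
  set G := (polys m (r - s) ×ˢ polys m (r - s)).image fun p => p.1 * p.2 with hG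
  have hGc : (G.card : ℝ) ≤ 4 ^ binomLe m (r - s) := by
    have h1 : G.card ≤ _ := Finset.card_image_le
    rw [Finset.card_product, card_polys, ← mul_pow] at h1
    exact_mod_cast h1
  have := card_le_of_approx (G := G) hF (δ := 3 * 4 ^ s * δ ^ 2) (by positivity) e fun f hf => by
    obtain ⟨g₁, h₁, g₂, h₂, hg⟩ := exists_product_approx (mem_polys.mp (hF hf)) s (h f hf)
    exact ⟨g₁ * g₂, Finset.mem_image.mpr
      ⟨(g₁, g₂), Finset.mem_product.mpr ⟨mem_polys.mpr h₁, mem_polys.mpr h₂⟩, rfl⟩, hg⟩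
  refine this.trans ?_
  gcongr

end Counting

section Bias

variable {m r : ℕ}

/-- The function `(-1)^f`. -/
noncomputable def sgn (f : (Fin m → ZMod 2) → ZMod 2) (x : Fin m → ZMod 2) : ℝ :=
  if f x = 0 then 1 else -1

lemma sgn_sq (f : (Fin m → ZMod 2) → ZMod 2) (x : Fin m → ZMod 2) : sgn f x ^ 2 = 1 := by
  unfold sgn; split_ifs <;> norm_num

lemma sgn_add (f h : (Fin m → ZMod 2) → ZMod 2) (x : Fin m → ZMod 2) :
    sgn (f + h) x = sgn h x * sgn f x := by
  unfold sgn
  rw [Pi.add_apply]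
  have key : ∀ u v : ZMod 2,
      (u = 0 ∧ v = 0 ∧ u + v = 0) ∨ (u = 0 ∧ v ≠ 0 ∧ u + v ≠ 0) ∨
      (u ≠ 0 ∧ v = 0 ∧ u + v ≠ 0) ∨ (u ≠ 0 ∧ v ≠ 0 ∧ u + v = 0) := by decide
  rcases key (f x) (h x) with ⟨h1, h2, h3⟩ | ⟨h1, h2, h3⟩ | ⟨h1, h2, h3⟩ | ⟨h1, h2, h3⟩ <;>
    simp [h1, h2, h3]

lemma sum_sgn (f : (Fin m → ZMod 2) → ZMod 2) : ∑ x, sgn f x = bias f * 2 ^ m := by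
  classical
  have h1 : ∀ x, sgn f x = 2 * (if f x = 0 then 1 else 0) - 1 := by
    intro x; unfold sgn; split_ifs <;> norm_num
  simp only [h1, Finset.sum_sub_distrib, ← Finset.mul_sum, Finset.sum_boole, Finset.sum_const,
    Finset.card_univ, card_points, nsmul_eq_mul, mul_one, bias]
  push_cast
  field_simp

/-- The sum of a function over all translates by subset sums of a list of vectors. -/
def shiftSum : List (Fin m → ZMod 2) → ((Fin m → ZMod 2) → ℝ) → (Fin m → ZMod 2) → ℝ
  | [], σ, x => σ x
  | y :: l, σ, x => shiftSum l σ x + shiftSum l σ (x + y)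

lemma sum_comp_add_right (h : (Fin m → ZMod 2) → ℝ) (y : Fin m → ZMod 2) :
    ∑ x, h (x + y) = ∑ x, h x :=
  Fintype.sum_equiv (Equiv.addRight y) _ _ fun _ => rfl

lemma sum_comp_add_left (h : (Fin m → ZMod 2) → ℝ) (y : Fin m → ZMod 2) :
    ∑ x, h (y + x) = ∑ x, h x :=
  Fintype.sum_equiv (Equiv.addLeft y) _ _ fun _ => rfl

lemma sum_shiftSum (l : List (Fin m → ZMod 2)) (σ : (Fin m → ZMod 2) → ℝ) :
    ∑ x, shiftSum l σ x = 2 ^ l.length * ∑ x, σ x := by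
  induction l with
  | nil => simp [shiftSum]
  | cons y l ih =>
    simp only [shiftSum, Finset.sum_add_distrib, sum_comp_add_right, ih, List.length_cons]
    ring

lemma exists_shift_sq_le (h : (Fin m → ZMod 2) → ℝ) :
    ∃ y, ∑ x, (h x + h (x + y)) ^ 2 ≤ 2 * ∑ x, h x ^ 2 + 2 * (∑ x, h x) ^ 2 / 2 ^ m := by
  have h1 : ∑ y : Fin m → ZMod 2, ∑ x, (h x + h (x + y)) ^ 2
      ≤ ∑ _y : Fin m → ZMod 2, (2 * ∑ x, h x ^ 2 + 2 * (∑ x, h x) ^ 2 / 2 ^ m) := by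
    refine le_of_eq ?_
    have h2 : ∀ y : Fin m → ZMod 2, ∑ x, (h x + h (x + y)) ^ 2
        = 2 * ∑ x, h x ^ 2 + 2 * ∑ x, h x * h (x + y) := by
      intro y
      have : ∀ x, (h x + h (x + y)) ^ 2 = h x ^ 2 + h (x + y) ^ 2 + 2 * (h x * h (x + y)) :=
        fun x => by ring
      simp only [this, Finset.sum_add_distrib, ← Finset.mul_sum,
        sum_comp_add_right fun x => h x ^ 2]
      ring
    have h3 : ∑ y : Fin m → ZMod 2, ∑ x, h x * h (x + y) = (∑ x, h x) ^ 2 := by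
      rw [Finset.sum_comm]
      simp only [← Finset.mul_sum, sum_comp_add_left, ← Finset.sum_mul]
      ring
    simp only [h2, Finset.sum_add_distrib, ← Finset.mul_sum, h3, Finset.sum_const,
      Finset.card_univ, card_points, nsmul_eq_mul]
    push_cast
    field_simp
  obtain ⟨y, -, hy⟩ := Finset.exists_le_of_sum_le Finset.univ_nonempty h1
  exact ⟨y, hy⟩

lemma exists_shifts_sq_le (f : (Fin m → ZMod 2) → ZMod 2) (d : ℕ) :
    ∃ l : List (Fin m → ZMod 2), l.length = d ∧
      ∑ x, shiftSum l (sgn f) x ^ 2 ≤ (2 ^ d + 4 ^ d * bias f ^ 2) * 2 ^ m := by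
  induction d with
  | zero =>
    refine ⟨[], rfl, ?_⟩
    simp only [shiftSum, sgn_sq, Finset.sum_const, Finset.card_univ, card_points, nsmul_eq_mul]
    push_cast
    nlinarith [mul_nonneg (sq_nonneg (bias f)) (pow_nonneg (zero_le_two (α := ℝ)) m)]
  | succ d ih =>
    obtain ⟨l, hl, hsq⟩ := ih
    obtain ⟨y, hy⟩ := exists_shift_sq_le (shiftSum l (sgn f))
    refine ⟨y :: l, by simp [hl], ?_⟩
    simp only [shiftSum]
    refine hy.trans ?_
    rw [sum_shiftSum, sum_sgn, hl]
    have h4 : (4 : ℝ) ^ d = 2 ^ d * 2 ^ d := by rw [← mul_pow]; norm_num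
    have h5 : 2 * ((2 : ℝ) ^ d * (bias f * 2 ^ m)) ^ 2 / 2 ^ m
        = 2 * 4 ^ d * bias f ^ 2 * 2 ^ m := by rw [h4]; field_simp
    rw [h5, pow_succ (2 : ℝ) d, pow_succ (4 : ℝ) d]
    linarith

/-- A guess for `f` computed from its derivatives in the directions spanned by `l`. -/
noncomputable def decode (l : List (Fin m → ZMod 2)) (f : (Fin m → ZMod 2) → ZMod 2)
    (x : Fin m → ZMod 2) : ZMod 2 :=
  if 0 < sgn f x * shiftSum l (sgn f) x then 0 else 1

lemma decode_eq_of_pos {l : List (Fin m → ZMod 2)} {f : (Fin m → ZMod 2) → ZMod 2}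
    {x : Fin m → ZMod 2} (h : 0 < shiftSum l (sgn f) x) : decode l f x = f x := by
  have h01 : ∀ u : ZMod 2, u ≠ 0 → 1 = u := by decide
  unfold decode
  by_cases hf : f x = 0
  · rw [if_pos (by simpa [sgn, hf] using h), hf]
  · rw [if_neg (by simpa [sgn, hf] using h.le)]
    exact h01 _ hf

lemma exists_decode_close {f : (Fin m → ZMod 2) → ZMod 2} {β δ : ℝ} {d : ℕ} (hβ : 0 < β)
    (hf : β ≤ bias f) (hδ : 1 ≤ δ * (2 ^ d * β ^ 2)) :
    ∃ l : List (Fin m → ZMod 2), l.length = d ∧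
      ((univ.filter fun x => f x ≠ decode l f x).card : ℝ) ≤ δ * 2 ^ m := by
  classical
  obtain ⟨l, hl, hsq⟩ := exists_shifts_sq_le f d
  refine ⟨l, hl, ?_⟩
  have hb : 0 < bias f := hβ.trans_le hf
  have h4 : (4 : ℝ) ^ d = 2 ^ d * 2 ^ d := by rw [← mul_pow]; norm_num
  set S := univ.filter fun x => f x ≠ decode l f x with hS
  have h1 : ∀ x ∈ S, 4 ^ d * bias f ^ 2 ≤ (shiftSum l (sgn f) x - 2 ^ d * bias f) ^ 2 := by
    intro x hx
    have hneg : shiftSum l (sgn f) x ≤ 0 := by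
      by_contra hpos
      exact (Finset.mem_filter.mp hx).2 (decode_eq_of_pos (not_le.mp hpos)).symm
    have h2 : 0 ≤ 2 ^ d * bias f := by positivity
    rw [h4]
    nlinarith
  have h2 : (S.card : ℝ) * (4 ^ d * bias f ^ 2) ≤ 2 ^ d * 2 ^ m := by
    calc (S.card : ℝ) * (4 ^ d * bias f ^ 2) = ∑ x ∈ S, 4 ^ d * bias f ^ 2 := by
          rw [Finset.sum_const, nsmul_eq_mul]
      _ ≤ ∑ x ∈ S, (shiftSum l (sgn f) x - 2 ^ d * bias f) ^ 2 := Finset.sum_le_sum h1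
      _ ≤ ∑ x, (shiftSum l (sgn f) x - 2 ^ d * bias f) ^ 2 :=
          Finset.sum_le_sum_of_subset_of_nonneg (Finset.subset_univ _) fun _ _ _ => sq_nonneg _
      _ = ∑ x, shiftSum l (sgn f) x ^ 2 - 2 * (2 ^ d * bias f) * ∑ x, shiftSum l (sgn f) x
            + 2 ^ m * (2 ^ d * bias f) ^ 2 := by
          have : ∀ x, (shiftSum l (sgn f) x - 2 ^ d * bias f) ^ 2 = shiftSum l (sgn f) x ^ 2
              - 2 * (2 ^ d * bias f) * shiftSum l (sgn f) x + (2 ^ d * bias f) ^ 2 :=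
            fun x => by ring
          simp only [this, Finset.sum_add_distrib, Finset.sum_sub_distrib, ← Finset.mul_sum,
            Finset.sum_const, Finset.card_univ, card_points, nsmul_eq_mul]
          push_cast
          ring
      _ ≤ _ := by
          rw [sum_shiftSum, sum_sgn, hl]
          rw [h4] at hsq
          nlinarith
  have hd : (0 : ℝ) < 2 ^ d := by positivity
  have h3 : (S.card : ℝ) * (2 ^ d * bias f ^ 2) ≤ 2 ^ m := by
    refine le_of_mul_le_mul_left ?_ hd
    rw [h4] at h2
    linarith
  have hδ0 : 0 < δ := by
    by_contra hcon
    have : δ * (2 ^ d * β ^ 2) ≤ 0 := mul_nonpos_of_nonpos_of_nonneg (not_lt.mp hcon) (by positivity)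
    linarith
  calc (S.card : ℝ) = S.card * 1 := by ring
    _ ≤ S.card * (δ * (2 ^ d * β ^ 2)) := by gcongr
    _ ≤ S.card * (δ * (2 ^ d * bias f ^ 2)) := by gcongr
    _ = δ * (S.card * (2 ^ d * bias f ^ 2)) := by ring
    _ ≤ _ := by gcongr

lemma shiftSum_mul_invariant {l : List (Fin m → ZMod 2)} {τ : (Fin m → ZMod 2) → ℝ}
    (hτ : ∀ y ∈ l, ∀ x, τ (x + y) = τ x) (σ : (Fin m → ZMod 2) → ℝ) (x : Fin m → ZMod 2) :
    shiftSum l (fun z => τ z * σ z) x = τ x * shiftSum l σ x := by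
  induction l generalizing x with
  | nil => rfl
  | cons y l ih =>
    have ih' := ih fun z hz => hτ z (List.mem_cons_of_mem _ hz)
    simp only [shiftSum, ih', hτ y List.mem_cons_self]
    ring

lemma decode_add_invariant {l : List (Fin m → ZMod 2)} {h : (Fin m → ZMod 2) → ZMod 2}
    (hh : ∀ y ∈ l, ∀ x, h (x + y) = h x) (f : (Fin m → ZMod 2) → ZMod 2) :
    decode l (f + h) = decode l f := by
  ext x
  unfold decode
  have h1 : sgn (f + h) = fun z => sgn h z * sgn f z := funext fun z => sgn_add f h z
  have h2 := shiftSum_mul_invariant (l := l) (τ := sgn h)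
    (fun y hy x => by unfold sgn; rw [hh y hy]) (sgn f) x
  rw [h1, h2]
  have h3 : sgn h x * sgn f x * (sgn h x * shiftSum l (sgn f) x)
      = sgn h x ^ 2 * (sgn f x * shiftSum l (sgn f) x) := by ring
  rw [h3, sgn_sq, one_mul]

lemma exists_surjective_vanishing (l : List (Fin m → ZMod 2)) :
    ∃ L : (Fin m → ZMod 2) →ₗ[ZMod 2] Fin (m - l.length) → ZMod 2,
      Function.Surjective L ∧ ∀ y ∈ l, L y = 0 := by
  classical
  set W : Submodule (ZMod 2) (Fin m → ZMod 2) := Submodule.span (ZMod 2) (l.toFinset : Set _)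
  have hW : Module.finrank (ZMod 2) W ≤ l.length :=
    (finrank_span_finset_le_card _).trans (List.toFinset_card_le l)
  have hQ := W.finrank_quotient_add_finrank
  rw [Module.finrank_fin_fun] at hQ
  obtain ⟨φ, hφ⟩ : ∃ φ : ((Fin m → ZMod 2) ⧸ W) →ₗ[ZMod 2] Fin (m - l.length) → ZMod 2,
      Function.Surjective φ := by
    obtain ⟨g, hg⟩ := (finrank_le_iff_exists_linearMap (R := ZMod 2)
      (M := Fin (m - l.length) → ZMod 2) (M' := (Fin m → ZMod 2) ⧸ W)).mp
      (by rw [Module.finrank_fin_fun]; omega)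
    obtain ⟨φ, hφ⟩ := g.exists_leftInverse_of_injective (LinearMap.ker_eq_bot.mpr hg)
    exact ⟨φ, fun v => ⟨g v, LinearMap.congr_fun hφ v⟩⟩
  refine ⟨φ.comp W.mkQ, hφ.comp W.mkQ_surjective, fun y hy => ?_⟩
  have : W.mkQ y = 0 := by
    rw [Submodule.mkQ_apply, Submodule.Quotient.mk_eq_zero]
    exact Submodule.subset_span (by simpa using hy)
  rw [LinearMap.comp_apply, this, map_zero]

lemma two_pow_le_card_invariant (l : List (Fin m → ZMod 2)) :
    ∃ I ⊆ polys m r, (∀ h ∈ I, ∀ y ∈ l, ∀ x, h (x + y) = h x) ∧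
      I.card = 2 ^ binomLe (m - l.length) r := by
  classical
  obtain ⟨L, hL, hl⟩ := exists_surjective_vanishing l
  refine ⟨(polys (m - l.length) r).image fun g z => g (L z), ?_, ?_, ?_⟩
  · intro h hh
    obtain ⟨g, hg, rfl⟩ := Finset.mem_image.mp hh
    exact mem_polys.mpr (linear_comp_mem_polySpace (mem_polys.mp hg) L)
  · intro h hh y hy x
    obtain ⟨g, hg, rfl⟩ := Finset.mem_image.mp hh
    simp [hl y hy]
  · rw [Finset.card_image_of_injective, card_polys]
    exact hL.injective_comp_right

open Classical in
lemma card_image_decode_mul_le (l : List (Fin m → ZMod 2)) :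
    2 ^ binomLe (m - l.length) r * ((polys m r).image (decode l)).card ≤ 2 ^ binomLe m r := by
  obtain ⟨I, hI, hinv, hcard⟩ := two_pow_le_card_invariant (r := r) l
  rw [← hcard, ← card_polys]
  refine Finset.mul_card_image_le_card _ _ fun b hb => ?_
  obtain ⟨f, hf, rfl⟩ := Finset.mem_image.mp hb
  refine Finset.card_le_card_of_injOn (fun h => f + h) ?_ fun _ _ _ _ h => add_right_injective f h
  intro h hh
  simp only [Finset.coe_filter, Set.mem_ofPred_eq]
  exact ⟨mem_polys.mpr (add_mem (mem_polys.mp hf) (mem_polys.mp (hI hh))),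
    decode_add_invariant (hinv h hh) f⟩

/-- Counting polynomials whose bias is at least `β`. -/
lemma card_biased_le {F : Finset ((Fin m → ZMod 2) → ZMod 2)} (hF : F ⊆ polys m r)
    {β δ : ℝ} {d : ℕ} (e : ℕ) (hβ : 0 < β) (hδ : 1 ≤ δ * (2 ^ d * β ^ 2))
    (h : ∀ f ∈ F, β ≤ bias f) :
    (F.card : ℝ) ≤ (2 ^ m) ^ d * (2 ^ binomLe m r / 2 ^ binomLe (m - d) r) * 2 ^ m
      * Real.exp ((e * δ + (1 / 2) ^ e) * binomLe m r) := by
  classical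
  set G := (univ : Finset (List.Vector (Fin m → ZMod 2) d)).biUnion
    fun l => (polys m r).image (decode l.1) with hG
  have hGc : (G.card : ℝ) ≤ (2 ^ m) ^ d * (2 ^ binomLe m r / 2 ^ binomLe (m - d) r) := by
    have h1 : (G.card : ℝ) ≤ ∑ l : List.Vector (Fin m → ZMod 2) d,
        (((polys m r).image (decode l.1)).card : ℝ) := by
      exact_mod_cast Finset.card_biUnion_le
    refine h1.trans ?_
    have h2 : ∀ l : List.Vector (Fin m → ZMod 2) d,
        (((polys m r).image (decode l.1)).card : ℝ)
          ≤ 2 ^ binomLe m r / 2 ^ binomLe (m - d) r := by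
      intro l
      rw [le_div_iff₀ (by positivity), mul_comm]
      have := card_image_decode_mul_le (r := r) l.1
      rw [l.2] at this
      exact_mod_cast this
    refine (Finset.sum_le_sum fun l _ => h2 l).trans ?_
    rw [Finset.sum_const, Finset.card_univ, card_vector, card_points, nsmul_eq_mul]
    push_cast
    rfl
  have hδ0 : 0 ≤ δ := by
    by_contra hcon
    have : δ * (2 ^ d * β ^ 2) ≤ 0 :=
      mul_nonpos_of_nonpos_of_nonneg (not_le.mp hcon).le (by positivity)
    linarith
  have := card_le_of_approx (G := G) hF hδ0 e fun f hf => by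
    obtain ⟨l, hl, hc⟩ := exists_decode_close hβ (h f hf) hδ
    exact ⟨decode l f, Finset.mem_biUnion.mpr ⟨⟨l, hl⟩, Finset.mem_univ _,
      Finset.mem_image_of_mem _ (hF hf)⟩, hc⟩
  refine this.trans ?_
  gcongr

end Bias

section Binomial

lemma binomLe_zero (m : ℕ) : binomLe m 0 = 1 := by simp [binomLe]

lemma binomLe_one (m : ℕ) : binomLe m 1 = m + 1 := by
  simp [binomLe, Finset.sum_range_succ, add_comm]

lemma binomLe_mono {m s r : ℕ} (h : s ≤ r) : binomLe m s ≤ binomLe m r :=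
  Finset.sum_le_sum_of_subset (Finset.range_mono (by omega))

lemma lt_binomLe {m r : ℕ} (hr : 1 ≤ r) : m < binomLe m r := by
  have := binomLe_mono (m := m) hr
  rw [binomLe_one] at this
  omega

lemma sq_le_four_mul_binomLe {m r : ℕ} (hr : 2 ≤ r) : m ^ 2 ≤ 4 * binomLe m r := by
  have h := binomLe_mono (m := m) hr
  have h2 : binomLe m 2 = 1 + m + m.choose 2 := by simp [binomLe, Finset.sum_range_succ]
  have h3 := Nat.triangle_succ m
  have h4 : m.choose 2 * 2 = m * (m - 1) := by
    rw [Nat.choose_two_right, Nat.div_mul_cancel (Nat.even_mul_pred_self m).two_dvd]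
  rcases m with _ | m
  · simp
  · simp only [Nat.add_sub_cancel] at h4
    nlinarith

lemma mul_binomLe_le_succ {m r : ℕ} (h : 2 ^ 17 * (r + 1) ≤ m) :
    2 ^ 16 * binomLe m r ≤ binomLe m (r + 1) := by
  have h1 : ∀ i ∈ range (r + 1), 2 ^ 16 * m.choose i ≤ m.choose (i + 1) := by
    intro i hi
    have hi' := Finset.mem_range.mp hi
    have h2 := Nat.choose_succ_right_eq m i
    have h3 : 2 ^ 16 * (i + 1) ≤ m - i := by omega
    refine Nat.le_of_mul_le_mul_right (c := i + 1) ?_ (by omega)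
    rw [h2]
    calc 2 ^ 16 * m.choose i * (i + 1) = m.choose i * (2 ^ 16 * (i + 1)) := by ring
      _ ≤ _ := Nat.mul_le_mul_left _ h3
  unfold binomLe
  rw [Finset.mul_sum, Finset.sum_range_succ' _ (r + 1)]
  exact (Finset.sum_le_sum h1).trans (Nat.le_add_right _ _)

lemma binomLe_sub_mul_le {m r : ℕ} (h : 2 ^ 17 * r ≤ m) (s : ℕ) :
    binomLe m (r - s) * 2 ^ (16 * s) ≤ binomLe m r + 2 ^ (16 * s) := by
  have h1 : ∀ s ≤ r, binomLe m (r - s) * 2 ^ (16 * s) ≤ binomLe m r := by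
    intro s
    induction s with
    | zero => simp
    | succ s ih =>
      intro hs
      have h2 := mul_binomLe_le_succ (m := m) (r := r - (s + 1)) (by omega)
      rw [show r - (s + 1) + 1 = r - s by omega] at h2
      calc binomLe m (r - (s + 1)) * 2 ^ (16 * (s + 1))
          = 2 ^ 16 * binomLe m (r - (s + 1)) * 2 ^ (16 * s) := by ring
        _ ≤ binomLe m (r - s) * 2 ^ (16 * s) := Nat.mul_le_mul_right _ h2
        _ ≤ _ := ih (by omega)
  rcases le_or_gt s r with hs | hs
  · exact (h1 s hs).trans (Nat.le_add_right _ _)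
  · rw [show r - s = 0 by omega, binomLe_zero]
    omega

lemma binomLe_succ_mul_le (m r : ℕ) :
    (binomLe (m + 1) r : ℝ) * (1 - r / (m + 1)) ≤ binomLe m r := by
  unfold binomLe
  push_cast
  rw [Finset.sum_mul]
  refine Finset.sum_le_sum fun i hi => ?_
  have hir : (i : ℝ) ≤ r := by exact_mod_cast Nat.lt_succ_iff.mp (Finset.mem_range.mp hi)
  have hm : (0 : ℝ) < m + 1 := by positivity
  rcases le_or_gt i (m + 1) with hi' | hi'
  · have h1 := Nat.choose_mul_succ_eq m i
    have h2 : (m.choose i : ℝ) * (m + 1) = (m + 1).choose i * (m + 1 - i) := by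
      have := congrArg (Nat.cast (R := ℝ)) h1
      push_cast [Nat.cast_sub hi'] at this
      exact this
    have h3 : (m.choose i : ℝ) = (m + 1).choose i * (1 - i / (m + 1)) := by
      field_simp
      linarith
    rw [h3]
    gcongr
  · rw [Nat.choose_eq_zero_of_lt hi']
    simp

lemma pow_mul_binomLe_le {m r d : ℕ} {γ : ℝ} (hγ : 2 * γ ≤ 1) (hγ0 : 0 ≤ γ)
    (hr : (r : ℝ) ≤ γ * m) (hd : 2 * d ≤ m) :
    (1 - 2 * γ) ^ d * binomLe m r ≤ binomLe (m - d) r := by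
  induction d with
  | zero => simp
  | succ d ih =>
    have ih := ih (by omega)
    obtain ⟨n, hn⟩ : ∃ n, m - d = n + 1 := ⟨m - d - 1, by omega⟩
    rw [show m - (d + 1) = n by omega]
    refine le_trans ?_ (binomLe_succ_mul_le n r)
    rw [hn] at ih
    have hmn : (m : ℝ) ≤ 2 * (n + 1) := by
      have : m ≤ 2 * (n + 1) := by omega
      exact_mod_cast this
    have h1 : (r : ℝ) / (n + 1) ≤ 2 * γ := by
      rw [div_le_iff₀ (by positivity)]
      nlinarith
    calc (1 - 2 * γ) ^ (d + 1) * binomLe m r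
        = (1 - 2 * γ) ^ d * binomLe m r * (1 - 2 * γ) := by ring
      _ ≤ binomLe (n + 1) r * (1 - 2 * γ) := by
          gcongr
      _ ≤ _ := by gcongr

lemma binomLe_le_exp {m r : ℕ} (hr : (r : ℝ) ≤ 2⁻¹ ^ 60 * m) :
    (binomLe m r : ℝ) ≤ Real.exp (m / 32) := by
  have h1 : (1 / 64 : ℝ) ^ r * binomLe m r ≤ (1 / 64 + 1) ^ m := by
    rw [add_pow, binomLe, Nat.cast_sum, Finset.mul_sum]
    have hrm : r ≤ m := by
      have : (r : ℝ) ≤ m := hr.trans (by nlinarith [(Nat.cast_nonneg m : (0 : ℝ) ≤ m)])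
      exact_mod_cast this
    refine le_trans (Finset.sum_le_sum (g := fun i =>
      (1 / 64 : ℝ) ^ i * 1 ^ (m - i) * (m.choose i : ℝ)) fun i hi => ?_)
      (Finset.sum_le_sum_of_subset_of_nonneg (Finset.range_mono (by omega))
        fun i _ _ => by positivity)
    rw [one_pow, mul_one]
    gcongr ?_ * _
    exact pow_le_pow_of_le_one (by norm_num) (by norm_num)
      (Nat.lt_succ_iff.mp (Finset.mem_range.mp hi))
  have h2 : ((1 / 64 : ℝ) + 1) ^ m ≤ Real.exp (m / 64) := by
    have := Real.add_one_le_exp (1 / 64 : ℝ)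
    calc ((1 / 64 : ℝ) + 1) ^ m ≤ Real.exp (1 / 64) ^ m := by gcongr
      _ = _ := by rw [← Real.exp_nat_mul]; congr 1; ring
  have h3 : (64 : ℝ) ^ r ≤ Real.exp (m / 64) := by
    have h4 : (64 : ℝ) ≤ Real.exp 6 := by
      have := Real.add_one_le_exp (1 : ℝ)
      calc (64 : ℝ) = (1 + 1) ^ 6 := by norm_num
        _ ≤ Real.exp 1 ^ 6 := by gcongr
        _ = _ := by rw [← Real.exp_nat_mul]; norm_num
    calc (64 : ℝ) ^ r ≤ Real.exp 6 ^ r := by gcongr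
      _ = Real.exp (r * 6) := by rw [← Real.exp_nat_mul]
      _ ≤ _ := by
        gcongr
        norm_num at hr
        nlinarith [(Nat.cast_nonneg m : (0 : ℝ) ≤ m)]
  calc (binomLe m r : ℝ) = 64 ^ r * ((1 / 64 : ℝ) ^ r * binomLe m r) := by
        rw [← mul_assoc, ← mul_pow]; norm_num
    _ ≤ Real.exp (m / 64) * Real.exp (m / 64) := by
        gcongr
        exact h1.trans h2
    _ = _ := by rw [← Real.exp_add]; congr 1; ring

end Binomial

section Moment

variable {m r K : ℕ}

lemma one_add_bias_nonneg (f : (Fin m → ZMod 2) → ZMod 2) : 0 ≤ 1 + bias f := by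
  rw [one_add_bias]; positivity

lemma one_add_bias_eq (f : (Fin m → ZMod 2) → ZMod 2) :
    1 + bias f = 2 * (1 - ((univ.filter fun x => f x ≠ 0).card : ℝ) / 2 ^ m) := by
  have h := Finset.card_filter_add_card_filter_not (s := univ) fun x => f x = 0
  rw [Finset.card_univ, card_points] at h
  have h' : ((univ.filter fun x => f x = 0).card : ℝ) = 2 ^ m
      - ((univ.filter fun x => f x ≠ 0).card : ℝ) := by
    rw [eq_sub_iff_add_eq]
    exact_mod_cast h
  rw [one_add_bias, h']
  field_simp

lemma one_add_bias_le_two (f : (Fin m → ZMod 2) → ZMod 2) : 1 + bias f ≤ 2 := by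
  rw [one_add_bias_eq]
  have : 0 ≤ ((univ.filter fun x => f x ≠ 0).card : ℝ) / 2 ^ m := by positivity
  linarith

lemma two_pow_eq_exp (n : ℕ) : (2 : ℝ) ^ n = Real.exp (Real.log 2 * n) := by
  rw [mul_comm, Real.exp_nat_mul, Real.exp_log (by norm_num)]

lemma sum_pow_le {F : Finset ((Fin m → ZMod 2) → ZMod 2)} {a : ℝ}
    (h : ∀ f ∈ F, 1 + bias f ≤ Real.exp a) :
    ∑ f ∈ F, (1 + bias f) ^ K ≤ F.card * Real.exp (a * K) := by
  rw [← nsmul_eq_mul]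
  refine Finset.sum_le_card_nsmul _ _ _ fun f hf => ?_
  rw [mul_comm, Real.exp_nat_mul]
  exact pow_le_pow_left₀ (one_add_bias_nonneg f) (h f hf) K

lemma sum_pow_le_of_bias_le {F : Finset ((Fin m → ZMod 2) → ZMod 2)} (hF : F ⊆ polys m r)
    {τ : ℝ} (hτ : 0 ≤ τ) (hK : (K : ℝ) ≤ binomLe m r) (h : ∀ f ∈ F, bias f ≤ τ) :
    ∑ f ∈ F, (1 + bias f) ^ K ≤ 2 ^ binomLe m r * Real.exp (τ * binomLe m r) := by
  refine (sum_pow_le (a := τ) fun f hf => ?_).trans ?_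
  · linarith [h f hf, Real.add_one_le_exp τ]
  · have : (F.card : ℝ) ≤ 2 ^ binomLe m r := by
      exact_mod_cast card_polys (m := m) (r := r) ▸ Finset.card_le_card hF
    gcongr

lemma two_pow_le_exp (n : ℕ) : (2 : ℝ) ^ n ≤ Real.exp n := by
  rw [two_pow_eq_exp]
  gcongr
  nlinarith [Real.log_two_lt_d9, (Nat.cast_nonneg n : (0 : ℝ) ≤ n)]

lemma sum_pow_le_of_biased {F : Finset ((Fin m → ZMod 2) → ZMod 2)} (hF : F ⊆ polys m r)
    (hr : (r : ℝ) ≤ 2⁻¹ ^ 60 * m) (hK : (K : ℝ) ≤ binomLe m r) (j : ℕ)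
    (hj : 2 * (14 * j + 114) ≤ m) (h1 : ∀ f ∈ F, (1 / 64) ^ (j + 1) ≤ bias f)
    (h2 : ∀ f ∈ F, bias f ≤ (1 / 64) ^ j) (h3 : ∀ f ∈ F, bias f ≤ 1 - 2 * 2⁻¹ ^ 48) :
    ∑ f ∈ F, (1 + bias f) ^ K ≤ 2 ^ binomLe m r *
      Real.exp (m * (14 * j + 115) - 2⁻¹ ^ 49 * (1 / 2) ^ j * binomLe m r) := by
  have hl1 := Real.log_two_gt_d9
  have hl2 := Real.log_two_lt_d9
  set N := binomLe m r
  set v : ℝ := (1 / 2) ^ j with hv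
  have hv0 : 0 < v := by positivity
  set N' := binomLe (m - (14 * j + 114)) r with hN'
  have hcard := card_biased_le hF (51 + j) (β := (1 / 64) ^ (j + 1)) (d := 14 * j + 114)
    (δ := (1 / 4) ^ (51 + j)) (by positivity) (le_of_eq (by
      have e1 : (1 / 4 : ℝ) ^ (51 + j) = (1 / 2) ^ (102 + 2 * j) := by
        rw [show (1 / 4 : ℝ) = (1 / 2) ^ 2 by norm_num, ← pow_mul]; congr 1; ring
      have e2 : ((1 / 64 : ℝ) ^ (j + 1)) ^ 2 = (1 / 2) ^ (12 * j + 12) := by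
        rw [show (1 / 64 : ℝ) = (1 / 2) ^ 6 by norm_num, ← pow_mul, ← pow_mul]; congr 1; ring
      rw [e1, e2, mul_comm, mul_assoc, ← pow_add, show 12 * j + 12 + (102 + 2 * j)
        = 14 * j + 114 by ring, ← mul_pow]
      norm_num)) h1
  have hexp : ∀ f ∈ F, 1 + bias f ≤ Real.exp (v * (Real.log 2 - 2⁻¹ ^ 48)) := by
    intro f hf
    rcases Nat.eq_zero_or_pos j with hj0 | hj0
    · subst hj0
      have := Real.add_one_le_exp (-(2⁻¹ ^ 48) : ℝ)
      rw [hv, pow_zero, one_mul, sub_eq_add_neg, Real.exp_add, Real.exp_log (by norm_num)]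
      linarith [h3 f hf]
    · have e1 : (1 / 64 : ℝ) ^ j ≤ v * (1 / 32) := by
        rw [show (1 / 64 : ℝ) = 1 / 2 * (1 / 32) by norm_num, mul_pow]
        gcongr
        exact pow_le_of_le_one (by norm_num) (by norm_num) hj0.ne'
      have e2 : v * (1 / 32) ≤ v * (Real.log 2 - 2⁻¹ ^ 48) := by
        gcongr
        norm_num at hl1 ⊢
        linarith
      linarith [h2 f hf, Real.add_one_le_exp (v * (Real.log 2 - 2⁻¹ ^ 48))]
  have ha : 0 ≤ v * (Real.log 2 - 2⁻¹ ^ 48) := by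
    refine mul_nonneg hv0.le ?_
    norm_num at hl1 ⊢
    linarith
  have hbin : v * (1 - 2⁻¹ ^ 50) * N ≤ N' := by
    have e1 := pow_mul_binomLe_le (γ := 2⁻¹ ^ 60) (by norm_num) (by norm_num) hr hj
    refine le_trans ?_ e1
    gcongr ?_ * _
    rw [pow_add, pow_mul]
    have e2 : (1 / 2 : ℝ) ≤ (1 - 2 * 2⁻¹ ^ 60) ^ 14 := by
      refine le_trans ?_ (one_add_mul_le_pow (a := -(2 * 2⁻¹ ^ 60 : ℝ)) (by norm_num) 14)
      norm_num
    have e3 : (1 - 2⁻¹ ^ 50 : ℝ) ≤ (1 - 2 * 2⁻¹ ^ 60) ^ 114 := by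
      refine le_trans ?_ (one_add_mul_le_pow (a := -(2 * 2⁻¹ ^ 60 : ℝ)) (by norm_num) 114)
      norm_num
    rw [hv]
    gcongr
  have hsmall : ((51 + j : ℕ) : ℝ) * (1 / 4) ^ (51 + j) + (1 / 2) ^ (51 + j)
      ≤ v * 2⁻¹ ^ 50 := by
    have e1 : ((51 + j : ℕ) : ℝ) ≤ 2 ^ (51 + j) := by exact_mod_cast Nat.lt_two_pow_self.le
    have e2 : ((51 + j : ℕ) : ℝ) * (1 / 4) ^ (51 + j) ≤ (1 / 2) ^ (51 + j) := by
      calc ((51 + j : ℕ) : ℝ) * (1 / 4) ^ (51 + j) ≤ 2 ^ (51 + j) * (1 / 4) ^ (51 + j) := by gcongr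
        _ = _ := by rw [← mul_pow]; norm_num
    have e3 : v * 2⁻¹ ^ 50 = (1 / 2) ^ (51 + j) + (1 / 2) ^ (51 + j) := by
      rw [hv, pow_add]; norm_num; ring
    linarith
  calc ∑ f ∈ F, (1 + bias f) ^ K
      ≤ F.card * Real.exp (v * (Real.log 2 - 2⁻¹ ^ 48) * K) := sum_pow_le hexp
    _ ≤ ((2 ^ m) ^ (14 * j + 114) * (2 ^ N / 2 ^ N') * 2 ^ m
          * Real.exp (v * 2⁻¹ ^ 50 * N)) * Real.exp (v * (Real.log 2 - 2⁻¹ ^ 48) * N) := by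
        gcongr
        refine hcard.trans ?_
        gcongr
    _ = 2 ^ N * (2 ^ (m * (14 * j + 115)) / 2 ^ N' * Real.exp (v * 2⁻¹ ^ 50 * N
          + v * (Real.log 2 - 2⁻¹ ^ 48) * N)) := by
        rw [Real.exp_add, ← pow_mul]; ring
    _ ≤ _ := by
        gcongr
        rw [two_pow_eq_exp, two_pow_eq_exp, ← Real.exp_sub, ← Real.exp_add]
        gcongr
        push_cast
        have e1 : 0 ≤ (m : ℝ) * (14 * j + 115) := by positivity
        have e2 : Real.log 2 * ((m : ℝ) * (14 * j + 115)) ≤ m * (14 * j + 115) := by nlinarith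
        have e3 : Real.log 2 * (v * (1 - 2⁻¹ ^ 50) * N) ≤ Real.log 2 * N' := by gcongr
        have e4 : 0 ≤ v * N := by positivity
        have e5 : Real.log 2 * (v * N) ≤ v * N := by nlinarith
        norm_num at e3 ⊢
        linarith

lemma sum_pow_le_of_small_weight {F : Finset ((Fin m → ZMod 2) → ZMod 2)} (hF : F ⊆ polys m r)
    (hr : 2 ^ 17 * r ≤ m) (hK : (K : ℝ) ≤ binomLe m r) {s : ℕ} (hs : 8 ≤ s)
    (h1 : ∀ f ∈ F, ((univ.filter fun x => f x ≠ 0).card : ℝ) ≤ (1 / 64) ^ s * 2 ^ m)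
    (h2 : ∀ f ∈ F, (1 / 64) ^ (s + 1) * 2 ^ m ≤ ((univ.filter fun x => f x ≠ 0).card : ℝ)) :
    ∑ f ∈ F, (1 + bias f) ^ K ≤ 2 ^ binomLe m r *
      Real.exp (m + 2 - (1 / 64) ^ s * 2⁻¹ ^ 7 * binomLe m r) := by
  have hl1 := Real.log_two_gt_d9
  have hl2 := Real.log_two_lt_d9
  set N := binomLe m r
  set v : ℝ := (1 / 64) ^ s with hv
  have hv0 : 0 < v := by positivity
  have hv1 : v ≤ 1 := pow_le_one₀ (by norm_num) (by norm_num)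
  set u : ℝ := (1 / 256) ^ s with hu
  have hu0 : 0 < u := by positivity
  have huv : u ≤ v * 2⁻¹ ^ 16 := by
    rw [hu, hv, show (1 / 256 : ℝ) = 1 / 64 * (1 / 4) by norm_num, mul_pow]
    gcongr
    calc (1 / 4 : ℝ) ^ s ≤ (1 / 4) ^ 8 := pow_le_pow_of_le_one (by norm_num) (by norm_num) hs
      _ = _ := by norm_num
  have hcard := card_small_weight_le hF s (8 * s) h1
  have hsmall : ((8 * s : ℕ) : ℝ) * (3 * 4 ^ s * v ^ 2) + (1 / 2) ^ (8 * s) ≤ 2 * u := by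
    have e1 : (1 / 2 : ℝ) ^ (8 * s) = u := by rw [pow_mul, hu]; norm_num
    have e2 : (24 * s : ℝ) ≤ 4 ^ s := by
      have : ∀ s, 8 ≤ s → 24 * s ≤ 4 ^ s := by
        intro s hs
        induction s, hs using Nat.le_induction with
        | base => norm_num
        | succ n hn ih => rw [pow_succ]; omega
      exact_mod_cast this s hs
    have e3 : (4 : ℝ) ^ s * (4 ^ s * v ^ 2) = u := by
      rw [hv, hu, ← pow_mul, mul_comm s 2, pow_mul, ← mul_pow, ← mul_pow]; norm_num
    calc ((8 * s : ℕ) : ℝ) * (3 * 4 ^ s * v ^ 2) + (1 / 2) ^ (8 * s)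
        = (24 * s) * (4 ^ s * v ^ 2) + u := by rw [e1]; push_cast; ring
      _ ≤ 4 ^ s * (4 ^ s * v ^ 2) + u := by gcongr
      _ = _ := by rw [e3]; ring
  have hbin : (binomLe m (r - s) : ℝ) ≤ u * N + 1 := by
    have e1 := binomLe_sub_mul_le hr s
    have e2 : (binomLe m (r - s) : ℝ) * 2 ^ (16 * s) ≤ N + 2 ^ (16 * s) := by exact_mod_cast e1
    have e3 : (2 : ℝ) ^ (16 * s) = 256 ^ s * 256 ^ s := by
      rw [pow_mul, ← mul_pow]; norm_num
    have e4 : u * 256 ^ s = 1 := by rw [hu, ← mul_pow]; norm_num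
    have e5 : (1 : ℝ) ≤ 256 ^ s := one_le_pow₀ (by norm_num)
    have e6 : u * u ≤ u * 1 := by gcongr; nlinarith
    have e7 : (binomLe m (r - s) : ℝ) = u * u * (binomLe m (r - s) * 2 ^ (16 * s)) := by
      rw [e3]; linear_combination (-(binomLe m (r - s) : ℝ)) * (u * 256 ^ s + 1) * e4
    rw [e7]
    calc u * u * (binomLe m (r - s) * 2 ^ (16 * s)) ≤ u * u * (N + 2 ^ (16 * s)) := by gcongr
      _ = u * u * N + 1 := by
        rw [e3]; linear_combination (u * 256 ^ s + 1) * e4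
      _ ≤ u * 1 * N + 1 := by gcongr
      _ = _ := by ring
  have hexp : ∀ f ∈ F, 1 + bias f ≤ Real.exp (Real.log 2 - v * 2⁻¹ ^ 6) := by
    intro f hf
    have e1 := h2 f hf
    have e2 : v * 2⁻¹ ^ 6 ≤ ((univ.filter fun x => f x ≠ 0).card : ℝ) / 2 ^ m := by
      rw [le_div_iff₀ (by positivity)]
      refine le_trans (le_of_eq ?_) e1
      rw [hv]; ring
    have := Real.add_one_le_exp (-(v * 2⁻¹ ^ 6))
    rw [sub_eq_add_neg, Real.exp_add, Real.exp_log (by norm_num), one_add_bias_eq]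
    linarith
  have ha : 0 ≤ Real.log 2 - v * 2⁻¹ ^ 6 := by
    norm_num at hl1 ⊢
    linarith
  calc ∑ f ∈ F, (1 + bias f) ^ K
      ≤ F.card * Real.exp ((Real.log 2 - v * 2⁻¹ ^ 6) * K) := sum_pow_le hexp
    _ ≤ (4 ^ binomLe m (r - s) * 2 ^ m * Real.exp (2 * u * N))
          * Real.exp ((Real.log 2 - v * 2⁻¹ ^ 6) * N) := by
        gcongr
        refine hcard.trans ?_
        gcongr
    _ = 2 ^ N * (Real.exp (Real.log 2 * (2 * binomLe m (r - s) : ℕ)) * 2 ^ m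
          * Real.exp (2 * u * N - v * 2⁻¹ ^ 6 * N)) := by
        rw [← two_pow_eq_exp, two_pow_eq_exp N, pow_mul, sub_mul, sub_eq_add_neg, Real.exp_add,
          sub_eq_add_neg, Real.exp_add]
        norm_num
        ring
    _ ≤ 2 ^ N * (Real.exp (Real.log 2 * (2 * binomLe m (r - s) : ℕ)) * Real.exp m
          * Real.exp (2 * u * N - v * 2⁻¹ ^ 6 * N)) := by
        gcongr
        exact two_pow_le_exp m
    _ ≤ _ := by
        rw [← Real.exp_add, ← Real.exp_add]
        gcongr
        push_cast
        have e1 : Real.log 2 * (2 * (binomLe m (r - s) : ℝ)) ≤ 1 * (2 * (u * N + 1)) := by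
          gcongr
          linarith
        have e2 : u * N ≤ v * 2⁻¹ ^ 16 * N := by gcongr
        have e3 : 0 ≤ v * N := by positivity
        norm_num at e2 ⊢
        linarith

lemma sum_pow_le_of_tiny_weight {F : Finset ((Fin m → ZMod 2) → ZMod 2)} (hF : F ⊆ polys m r)
    {ε : ℝ} (hK : (K : ℝ) ≤ (1 - ε) * binomLe m r) {s : ℕ} (hs : (1 / 2) ^ s ≤ ε / 8)
    (h : ∀ f ∈ F, ((univ.filter fun x => f x ≠ 0).card : ℝ) ≤ (1 / 64) ^ s * 2 ^ m) :
    ∑ f ∈ F, (1 + bias f) ^ K ≤ 2 ^ binomLe m r * Real.exp (m - ε / 4 * binomLe m r) := by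
  have hl1 := Real.log_two_gt_d9
  have hε : 0 < ε := by
    have : (0 : ℝ) < (1 / 2) ^ s := by positivity
    linarith
  set N := binomLe m r
  have hcard := card_low_weight_le hF (by positivity) s h
  have hsmall : (s : ℝ) * (1 / 64) ^ s + (1 / 2) ^ s ≤ ε / 4 := by
    have e1 : (s : ℝ) ≤ 32 ^ s := by exact_mod_cast (Nat.lt_pow_self (by norm_num)).le
    have e2 : (32 : ℝ) ^ s * (1 / 64) ^ s = (1 / 2) ^ s := by rw [← mul_pow]; norm_num
    have e3 : (s : ℝ) * (1 / 64) ^ s ≤ 32 ^ s * (1 / 64) ^ s := by gcongr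
    linarith
  calc ∑ f ∈ F, (1 + bias f) ^ K
      ≤ F.card * Real.exp (Real.log 2 * K) := sum_pow_le fun f _ => by
        rw [Real.exp_log (by norm_num)]; exact one_add_bias_le_two f
    _ ≤ (Real.exp m * Real.exp (ε / 4 * N)) * Real.exp (Real.log 2 * ((1 - ε) * N)) := by
        gcongr
        refine hcard.trans ?_
        gcongr
        exact two_pow_le_exp m
    _ = 2 ^ N * Real.exp (m + ε / 4 * N - Real.log 2 * ε * N) := by
        rw [two_pow_eq_exp, ← Real.exp_add, ← Real.exp_add, ← Real.exp_add]
        congr 1; ring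
    _ ≤ _ := by
        refine mul_le_mul_of_nonneg_left (Real.exp_le_exp.mpr ?_) (by positivity)
        have e1 : 0 ≤ ε * N := by positivity
        nlinarith

end Moment

section MomentBound

variable {m r K : ℕ}

lemma sum_le_sum_of_cover {α ι : Type*} [DecidableEq α] {S : Finset α} {I : Finset ι}
    {P : ι → α → Prop} [∀ i, DecidablePred (P i)] {g : α → ℝ} (hg : ∀ a ∈ S, 0 ≤ g a)
    (hP : ∀ a ∈ S, ∃ i ∈ I, P i a) : ∑ a ∈ S, g a ≤ ∑ i ∈ I, ∑ a ∈ S.filter (P i), g a := by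
  simp only [Finset.sum_filter]
  rw [Finset.sum_comm]
  refine Finset.sum_le_sum fun a ha => ?_
  obtain ⟨i, hi, hia⟩ := hP a ha
  have h := Finset.single_le_sum (f := fun i => if P i a then g a else 0)
    (fun i _ => by split_ifs <;> simp [hg a ha]) hi
  simpa [hia] using h

lemma sum_pow_le_of_moderate_bias {F : Finset ((Fin m → ZMod 2) → ZMod 2)} (hF : F ⊆ polys m r)
    (hr : (r : ℝ) ≤ 2⁻¹ ^ 60 * m) (hK : (K : ℝ) ≤ binomLe m r) {ρ q : ℝ} (hρ : 0 < ρ)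
    (hq : 0 < q) (hqN : q ^ 6 = 4 * binomLe m r / ρ)
    (hm : 8 * (28 * Real.log (4 / ρ) + 228) ≤ m) (h1 : ∀ f ∈ F, 1 / q ^ 6 < bias f)
    (h2 : ∀ f ∈ F, bias f ≤ 1 - 2 * 2⁻¹ ^ 48) :
    ∑ f ∈ F, (1 + bias f) ^ K ≤ 2 ^ binomLe m r * ((q + 1) *
      Real.exp (m * (14 * q + 115) - 2⁻¹ ^ 49 * binomLe m r / q)) := by
  classical
  set N := binomLe m r
  have hscale : ∀ f ∈ F, ∀ j : ℕ, bias f ≤ (1 / 64) ^ j → (2 : ℝ) ^ j < q := by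
    intro f hf j hj
    have e1 : 1 / q ^ 6 < (1 / 64) ^ j := (h1 f hf).trans_le hj
    refine lt_of_pow_lt_pow_left₀ 6 hq.le ?_
    rw [one_div_pow, one_div_lt_one_div (by positivity) (by positivity)] at e1
    rwa [← pow_mul, mul_comm, pow_mul, show (2 : ℝ) ^ 6 = 64 by norm_num]
  have hj_lt : ∀ j : ℕ, (j : ℝ) < 2 ^ j := fun j => by exact_mod_cast Nat.lt_two_pow_self
  have hcover := sum_le_sum_of_cover (S := F) (I := Finset.range ⌈q⌉₊)
    (P := fun j f => (1 / 64) ^ (j + 1) ≤ bias f ∧ bias f ≤ (1 / 64) ^ j)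
    (g := fun f => (1 + bias f) ^ K) (fun f _ => pow_nonneg (one_add_bias_nonneg f) K) (by
      intro f hf
      obtain ⟨j, hj1, hj2⟩ := exists_nat_pow_near_of_lt_one (y := (1 / 64 : ℝ))
        ((by positivity : 0 < 1 / q ^ 6).trans (h1 f hf))
        ((h2 f hf).trans (by norm_num)) (by norm_num) (by norm_num)
      exact ⟨j, Finset.mem_range.mpr (Nat.lt_ceil.mpr ((hj_lt j).trans (hscale f hf j hj2))),
        hj1.le, hj2⟩)
  refine hcover.trans ?_
  set E := Real.exp (m * (14 * q + 115) - 2⁻¹ ^ 49 * N / q)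
  have hterm : ∀ j ∈ Finset.range ⌈q⌉₊,
      ∑ f ∈ F.filter (fun f => (1 / 64) ^ (j + 1) ≤ bias f ∧ bias f ≤ (1 / 64) ^ j),
        (1 + bias f) ^ K ≤ 2 ^ N * E := by
    intro j _
    rcases (F.filter (fun f => (1 / 64) ^ (j + 1) ≤ bias f ∧ bias f ≤ (1 / 64) ^ j)
      ).eq_empty_or_nonempty with he | ⟨f₀, hf₀⟩
    · rw [he, Finset.sum_empty]; positivity
    have hf₀' := Finset.mem_filter.mp hf₀
    have hjq := hscale f₀ hf₀'.1 j hf₀'.2.2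
    have hjlog : (j : ℝ) ≤ Real.log (4 / ρ) + m / 32 := by
      rw [← Real.exp_le_exp, Real.exp_add, Real.exp_log (by positivity)]
      calc Real.exp j = Real.exp 1 ^ j := by rw [← Real.exp_nat_mul, mul_one]
        _ ≤ (2 ^ 6) ^ j := by
          gcongr
          linarith [Real.exp_one_lt_d9]
        _ = (2 ^ j) ^ 6 := by rw [← pow_mul, ← pow_mul, mul_comm]
        _ ≤ q ^ 6 := by gcongr
        _ = 4 / ρ * N := by rw [hqN]; ring
        _ ≤ _ := by
          gcongr
          exact binomLe_le_exp hr
    have hjm : 2 * (14 * j + 114) ≤ m := by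
      have : (2 * (14 * j + 114) : ℝ) ≤ m := by linarith
      exact_mod_cast this
    refine (sum_pow_le_of_biased ((Finset.filter_subset _ _).trans hF) hr hK j hjm
      (fun f hf => (Finset.mem_filter.mp hf).2.1) (fun f hf => (Finset.mem_filter.mp hf).2.2)
      (fun f hf => h2 f (Finset.mem_filter.mp hf).1)).trans ?_
    refine mul_le_mul_of_nonneg_left (Real.exp_le_exp.mpr ?_) (by positivity)
    refine sub_le_sub ?_ ?_
    · gcongr
      exact ((hj_lt j).trans hjq).le
    · rw [mul_div_right_comm, div_eq_mul_one_div, one_div_pow]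
      gcongr
  refine (Finset.sum_le_sum hterm).trans ?_
  rw [Finset.sum_const, Finset.card_range, nsmul_eq_mul]
  calc (⌈q⌉₊ : ℝ) * (2 ^ N * E) ≤ (q + 1) * (2 ^ N * E) := by
        gcongr
        exact (Nat.ceil_lt_add_one hq.le).le
    _ = _ := by ring

lemma sum_pow_le_of_low_weight {F : Finset ((Fin m → ZMod 2) → ZMod 2)} (hF : F ⊆ polys m r)
    (hr : 2 ^ 17 * r ≤ m) {ε : ℝ} (hK : (K : ℝ) ≤ (1 - ε) * binomLe m r) {s₁ : ℕ}
    (hs₁ : (1 / 2) ^ s₁ ≤ ε / 8)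
    (h : ∀ f ∈ F, ((univ.filter fun x => f x ≠ 0).card : ℝ) ≤ (1 / 64) ^ 8 * 2 ^ m) :
    ∑ f ∈ F, (1 + bias f) ^ K ≤ 2 ^ binomLe m r *
      (s₁ * Real.exp (m + 2 - (1 / 64) ^ s₁ * 2⁻¹ ^ 7 * binomLe m r)
        + Real.exp (m - ε / 4 * binomLe m r)) := by
  classical
  have hε : 0 < ε := by
    have : (0 : ℝ) < (1 / 2) ^ s₁ := by positivity
    linarith
  set N := binomLe m r
  have hKN : (K : ℝ) ≤ N := hK.trans (by nlinarith [(Nat.cast_nonneg N : (0 : ℝ) ≤ N)])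
  have h2m : (0 : ℝ) < 2 ^ m := by positivity
  rw [← Finset.sum_filter_add_sum_filter_not F fun f =>
    (1 / 64) ^ s₁ * 2 ^ m < ((univ.filter fun x => f x ≠ 0).card : ℝ), mul_add]
  refine add_le_add ?_ ?_
  · set F' := F.filter fun f => (1 / 64) ^ s₁ * 2 ^ m < ((univ.filter fun x => f x ≠ 0).card : ℝ)
      with hF'
    refine (sum_le_sum_of_cover (S := F') (I := Finset.range s₁)
      (P := fun s f => 8 ≤ s ∧
        ((univ.filter fun x => f x ≠ 0).card : ℝ) ≤ (1 / 64) ^ s * 2 ^ m ∧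
        (1 / 64) ^ (s + 1) * 2 ^ m ≤ ((univ.filter fun x => f x ≠ 0).card : ℝ))
      (g := fun f => (1 + bias f) ^ K) (fun f _ => pow_nonneg (one_add_bias_nonneg f) K) (by
        intro f hf
        obtain ⟨hfF, hf1⟩ := Finset.mem_filter.mp hf
        have hf2 := h f hfF
        set w : ℝ := ((univ.filter fun x => f x ≠ 0).card : ℝ) / 2 ^ m with hw
        have hwe : ((univ.filter fun x => f x ≠ 0).card : ℝ) = w * 2 ^ m := by
          rw [hw]; field_simp
        rw [hwe] at hf1 hf2 ⊢
        have hf1 := lt_of_mul_lt_mul_right hf1 h2m.le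
        have hf2 := le_of_mul_le_mul_right hf2 h2m
        obtain ⟨s, hs1, hs2⟩ := exists_nat_pow_near_of_lt_one (y := (1 / 64 : ℝ))
          ((by positivity : (0 : ℝ) < (1 / 64) ^ s₁).trans hf1)
          (hf2.trans (by norm_num)) (by norm_num) (by norm_num)
        have hs3 : s < s₁ := (pow_lt_pow_iff_right_of_lt_one₀ (by norm_num)
          (by norm_num)).mp (hf1.trans_le hs2)
        have hs4 : 8 < s + 1 := (pow_lt_pow_iff_right_of_lt_one₀ (by norm_num)
          (by norm_num)).mp (hs1.trans_le hf2)
        exact ⟨s, Finset.mem_range.mpr hs3, by omega, by gcongr, by gcongr⟩)).trans ?_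
    have hterm : ∀ s ∈ Finset.range s₁, ∑ f ∈ F'.filter (fun f => 8 ≤ s ∧
        ((univ.filter fun x => f x ≠ 0).card : ℝ) ≤ (1 / 64) ^ s * 2 ^ m ∧
        (1 / 64) ^ (s + 1) * 2 ^ m ≤ ((univ.filter fun x => f x ≠ 0).card : ℝ)),
        (1 + bias f) ^ K
        ≤ 2 ^ N * Real.exp (m + 2 - (1 / 64) ^ s₁ * 2⁻¹ ^ 7 * N) := by
      intro s hs
      rcases lt_or_ge s 8 with hs8 | hs8
      · rw [Finset.filter_false_of_mem fun f _ hf => absurd hf.1 (by omega), Finset.sum_empty]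
        positivity
      · refine (sum_pow_le_of_small_weight (((Finset.filter_subset _ _).trans
          (Finset.filter_subset _ _)).trans hF) hr hKN hs8
          (fun f hf => (Finset.mem_filter.mp hf).2.2.1)
          (fun f hf => (Finset.mem_filter.mp hf).2.2.2)).trans ?_
        have : (1 / 64 : ℝ) ^ s₁ ≤ (1 / 64) ^ s := pow_le_pow_of_le_one (by norm_num)
          (by norm_num) (Finset.mem_range.mp hs).le
        gcongr
    refine (Finset.sum_le_sum hterm).trans (le_of_eq ?_)
    rw [Finset.sum_const, Finset.card_range, nsmul_eq_mul]
    ring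
  · exact sum_pow_le_of_tiny_weight ((Finset.filter_subset _ _).trans hF) hK hs₁
      fun f hf => not_lt.mp (Finset.mem_filter.mp hf).2

lemma sum_polys_pow_le (hr : (r : ℝ) ≤ 2⁻¹ ^ 60 * m) {ε ρ q : ℝ} (hρ : 0 < ρ)
    (hK : (K : ℝ) ≤ (1 - ε) * binomLe m r) (hq : 0 < q) (hqN : q ^ 6 = 4 * binomLe m r / ρ)
    (hm : 8 * (28 * Real.log (4 / ρ) + 228) ≤ m) {s₁ : ℕ} (hs₁ : (1 / 2) ^ s₁ ≤ ε / 8) :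
    ∑ f ∈ polys m r, (1 + bias f) ^ K ≤ 2 ^ binomLe m r * (Real.exp (ρ / 4)
      + (q + 1) * Real.exp (m * (14 * q + 115) - 2⁻¹ ^ 49 * binomLe m r / q)
      + (s₁ * Real.exp (m + 2 - (1 / 64) ^ s₁ * 2⁻¹ ^ 7 * binomLe m r)
        + Real.exp (m - ε / 4 * binomLe m r))) := by
  classical
  have hε : 0 < ε := by
    have : (0 : ℝ) < (1 / 2) ^ s₁ := by positivity
    linarith
  have hKN : (K : ℝ) ≤ binomLe m r :=
    hK.trans (by nlinarith [(Nat.cast_nonneg (binomLe m r) : (0 : ℝ) ≤ binomLe m r)])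
  have hN : (0 : ℝ) < binomLe m r := by
    have : 0 < q ^ 6 := by positivity
    rw [hqN] at this
    by_contra hcon
    have := div_nonpos_of_nonpos_of_nonneg (a := 4 * (binomLe m r : ℝ)) (by linarith) hρ.le
    linarith
  have hr' : 2 ^ 17 * r ≤ m := by
    have : (2 ^ 17 * r : ℝ) ≤ m := by
      norm_num at hr ⊢
      nlinarith [(Nat.cast_nonneg m : (0 : ℝ) ≤ m)]
    exact_mod_cast this
  have hτ : 1 / q ^ 6 * binomLe m r = ρ / 4 := by
    rw [hqN]; field_simp
  rw [← Finset.sum_filter_add_sum_filter_not (polys m r) fun f => bias f ≤ 1 - 2 * 2⁻¹ ^ 48,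
    mul_add]
  refine add_le_add ?_ ?_
  · rw [← Finset.sum_filter_add_sum_filter_not _ fun f => bias f ≤ 1 / q ^ 6, mul_add]
    refine add_le_add ?_ ?_
    · rw [← hτ]
      exact sum_pow_le_of_bias_le ((Finset.filter_subset _ _).trans (Finset.filter_subset _ _))
        (by positivity) hKN fun f hf => (Finset.mem_filter.mp hf).2
    · exact sum_pow_le_of_moderate_bias
        ((Finset.filter_subset _ _).trans (Finset.filter_subset _ _)) hr hKN hρ hq hqN hm
        (fun f hf => not_le.mp (Finset.mem_filter.mp hf).2)
        fun f hf => (Finset.mem_filter.mp (Finset.mem_filter.mp hf).1).2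
  · refine sum_pow_le_of_low_weight (Finset.filter_subset _ _) hr' hK hs₁ fun f hf => ?_
    have h1 := not_le.mp (Finset.mem_filter.mp hf).2
    have h2 := one_add_bias_eq f
    have h3 : ((univ.filter fun x => f x ≠ 0).card : ℝ) / 2 ^ m ≤ (1 / 64) ^ 8 := by
      norm_num at h1 h2 ⊢
      linarith
    rwa [div_le_iff₀ (by positivity)] at h3

lemma le_mul_pow_of_le {B c q : ℝ} (hB : B ≤ c * q) (hq : 0 ≤ q) (k : ℕ) :
    B * q ^ k ≤ c * q ^ (k + 1) := by
  rw [pow_succ', ← mul_assoc]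
  gcongr

lemma exists_forall_moment_le {ε ρ : ℝ} (hε : 0 < ε) (hρ : 0 < ρ) (hρ1 : ρ ≤ 1) :
    ∃ m₀ : ℕ, ∀ m ≥ m₀, ∀ r : ℕ, 2 ≤ r → (r : ℝ) ≤ 2⁻¹ ^ 60 * m →
      ∀ K : ℕ, (K : ℝ) ≤ (1 - ε) * binomLe m r →
        ∑ f ∈ polys m r, (1 + bias f) ^ K ≤ (1 + ρ) * 2 ^ binomLe m r := by
  obtain ⟨s₁, hs₁⟩ := exists_pow_lt_of_lt_one (by positivity : 0 < ε / 8)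
    (by norm_num : (1 / 2 : ℝ) < 1)
  set ℓ := -Real.log (ρ / 8) with hℓ
  have hℓ0 : 0 ≤ ℓ := by
    have := Real.log_nonpos (x := ρ / 8) (by positivity) (by linarith)
    linarith
  set c₁ := 2⁻¹ ^ 51 * ρ with hc₁
  set c₂ := (1 / 64) ^ s₁ * 2⁻¹ ^ 9 * ρ with hc₂
  set c₃ := ε / 16 * ρ with hc₃
  have hc₁0 : 0 < c₁ := by positivity
  have hc₂0 : 0 < c₂ := by positivity
  have hc₃0 : 0 < c₃ := by positivity
  set Q := max 1 (max ((130 + ℓ) / c₁) (max ((s₁ + 3 + ℓ) / c₂) ((1 + ℓ) / c₃))) with hQ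
  refine ⟨⌈max (Q ^ 6) (8 * (28 * Real.log (4 / ρ) + 228))⌉₊, fun m hm r hr2 hr K hK => ?_⟩
  have hm' := (Nat.ceil_le.mp hm)
  have hm1 : Q ^ 6 ≤ m := (le_max_left _ _).trans hm'
  have hm2 : 8 * (28 * Real.log (4 / ρ) + 228) ≤ m := (le_max_right _ _).trans hm'
  set N := binomLe m r with hN
  have hmN : (m : ℝ) < N := by exact_mod_cast lt_binomLe (by omega)
  have hN0 : (0 : ℝ) < N := lt_of_le_of_lt (Nat.cast_nonneg m) hmN
  have hsq : (m : ℝ) ^ 2 ≤ 4 * N := by exact_mod_cast sq_le_four_mul_binomLe hr2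
  set q := (4 * (N : ℝ) / ρ) ^ ((6 : ℕ) : ℝ)⁻¹ with hq
  have hqN : q ^ 6 = 4 * N / ρ := Real.rpow_inv_natCast_pow (by positivity) (by norm_num)
  have hq0 : 0 < q := by positivity
  have hNq : (N : ℝ) = ρ * q ^ 6 / 4 := by rw [hqN]; field_simp
  have hQq : Q ≤ q := by
    refine le_of_pow_le_pow_left₀ (n := 6) (by norm_num) hq0.le ?_
    rw [hqN, le_div_iff₀ hρ]
    have : Q ^ 6 * ρ ≤ Q ^ 6 * 1 := by gcongr
    linarith
  have hq1 : 1 ≤ q := (le_max_left _ _).trans hQq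
  have hqc₁ : 130 + ℓ ≤ c₁ * q := by
    rw [← div_le_iff₀' hc₁0]
    exact ((le_max_left _ _).trans (le_max_right _ _)).trans hQq
  have hqc₂ : s₁ + 3 + ℓ ≤ c₂ * q := by
    rw [← div_le_iff₀' hc₂0]
    exact ((le_max_left _ _).trans ((le_max_right _ _).trans (le_max_right _ _))).trans hQq
  have hqc₃ : 1 + ℓ ≤ c₃ * q := by
    rw [← div_le_iff₀' hc₃0]
    exact ((le_max_right _ _).trans ((le_max_right _ _).trans (le_max_right _ _))).trans hQq
  have hmq : (m : ℝ) ≤ q ^ 3 := by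
    refine le_of_pow_le_pow_left₀ (n := 2) (by norm_num) (by positivity) ?_
    rw [← pow_mul]
    have : ρ * q ^ 6 ≤ 1 * q ^ 6 := by gcongr
    norm_num
    linarith
  have hexp : ∀ x, x ≤ -ℓ → Real.exp x ≤ ρ / 8 := by
    intro x hx
    rw [← Real.exp_log (by positivity : 0 < ρ / 8)]
    gcongr
    linarith
  have hp3 : q ≤ q ^ 3 := le_self_pow₀ hq1 (by norm_num)
  have hp4 : q ^ 3 ≤ q ^ 4 := pow_le_pow_right₀ hq1 (by norm_num)
  have hp5 : q ^ 4 ≤ q ^ 5 := pow_le_pow_right₀ hq1 (by norm_num)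
  have hp34 : q ^ 3 * q = q ^ 4 := by ring
  have hℓ4 : ℓ * 1 ≤ ℓ * q ^ 4 := by gcongr; linarith
  have hℓ5 : ℓ * 1 ≤ ℓ * q ^ 5 := by gcongr; linarith
  have t1 : (q + 1) * Real.exp (m * (14 * q + 115) - 2⁻¹ ^ 49 * N / q) ≤ ρ / 8 := by
    calc _ ≤ Real.exp q * Real.exp (m * (14 * q + 115) - 2⁻¹ ^ 49 * N / q) := by
          gcongr
          exact Real.add_one_le_exp q
      _ ≤ ρ / 8 := by
          rw [← Real.exp_add]
          refine hexp _ ?_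
          have e1 : 2⁻¹ ^ 49 * N / q = c₁ * q ^ (4 + 1) := by
            rw [hNq, hc₁]; field_simp; norm_num
          have e2 := le_mul_pow_of_le hqc₁ hq0.le 4
          have e3 : (m : ℝ) * (14 * q + 115) ≤ q ^ 3 * (14 * q + 115) := by gcongr
          rw [e1]
          linarith
  have t2 : s₁ * Real.exp (m + 2 - (1 / 64) ^ s₁ * 2⁻¹ ^ 7 * N) ≤ ρ / 8 := by
    calc _ ≤ Real.exp s₁ * Real.exp (m + 2 - (1 / 64) ^ s₁ * 2⁻¹ ^ 7 * N) := by
          gcongr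
          linarith [Real.add_one_le_exp (s₁ : ℝ)]
      _ ≤ ρ / 8 := by
          rw [← Real.exp_add]
          refine hexp _ ?_
          have e1 : (1 / 64) ^ s₁ * 2⁻¹ ^ 7 * N = c₂ * q ^ (5 + 1) := by
            rw [hNq, hc₂]; ring
          have e2 := le_mul_pow_of_le hqc₂ hq0.le 5
          have e3 : ((s₁ : ℝ) + 2) * 1 ≤ (s₁ + 2) * q ^ 5 := by gcongr; linarith
          rw [e1]
          linarith
  have t3 : Real.exp (m - ε / 4 * N) ≤ ρ / 8 := by
    refine hexp _ ?_
    have e1 : ε / 4 * N = c₃ * q ^ (5 + 1) := by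
      rw [hNq, hc₃]; ring
    have e2 := le_mul_pow_of_le hqc₃ hq0.le 5
    rw [e1]
    linarith
  have t0 : Real.exp (ρ / 4) ≤ 1 + ρ / 2 := by
    have h := Real.abs_exp_sub_one_le (x := ρ / 4) (by rw [abs_of_pos (by positivity)]; linarith)
    rw [abs_of_pos (by positivity : 0 < ρ / 4)] at h
    linarith [le_abs_self (Real.exp (ρ / 4) - 1)]
  refine (sum_polys_pow_le hr hρ hK hq0 hqN hm2 hs₁.le).trans ?_
  rw [mul_comm (1 + ρ)]
  exact mul_le_mul_of_nonneg_left (by linarith) (by positivity)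

lemma eq_of_mem_polySpace_zero {f : (Fin m → ZMod 2) → ZMod 2} (hf : f ∈ polySpace m 0)
    (x y : Fin m → ZMod 2) : f x = f y := by
  induction hf using Submodule.span_induction with
  | mem g hg =>
    obtain ⟨S, hS, rfl⟩ := hg
    have : S = ∅ := Finset.card_eq_zero.mp (Nat.le_zero.mp hS)
    simp [this]
  | zero => rfl
  | add g h _ _ hg hh => simp [hg, hh]
  | smul a g _ hg => simp [hg]

lemma bias_nonpos_of_affine {f : (Fin m → ZMod 2) → ZMod 2} (hf : f ∈ polySpace m 1)
    (h0 : f ≠ 0) : bias f ≤ 0 := by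
  have h2m : (0 : ℝ) < 2 ^ m := by positivity
  have key : ∀ u v : ZMod 2, u + v ≠ 0 → (u = 0 ∧ v ≠ 0) ∨ (u ≠ 0 ∧ v = 0) := by decide
  by_cases h : ∃ w x, f x + f (x + w) ≠ 0
  · obtain ⟨w, x, hx⟩ := h
    have hneg : ∀ z, sgn f (z + w) = - sgn f z := by
      intro z
      have hz : f z + f (z + w) ≠ 0 := by
        rwa [eq_of_mem_polySpace_zero (derivative_mem_polySpace hf w) z x]
      rcases key _ _ hz with ⟨h1, h2⟩ | ⟨h1, h2⟩ <;> simp [sgn, h1, h2]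
    have hsum := sum_comp_add_right (sgn f) w
    simp only [hneg, Finset.sum_neg_distrib, sum_sgn] at hsum
    nlinarith
  · push Not at h
    have hall : ∀ x, f x ≠ 0 := by
      obtain ⟨y, hy⟩ := Function.ne_iff.mp h0
      intro x hx
      have := h (y - x) x
      rw [hx, zero_add, add_sub_cancel] at this
      exact hy this
    simp [bias, hall]

lemma exists_forall_affine_moment_le {ε ρ : ℝ} (hε : 0 < ε) (hρ : 0 < ρ) :
    ∃ m₀ : ℕ, ∀ m ≥ m₀, ∀ K : ℕ, (K : ℝ) ≤ (1 - ε) * binomLe m 1 →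
      ∑ f ∈ polys m 1, (1 + bias f) ^ K ≤ (1 + ρ) * 2 ^ binomLe m 1 := by
  classical
  refine ⟨⌈-Real.log ρ * 2 / ε⌉₊, fun m hm K hK => ?_⟩
  set N := binomLe m 1
  have hm' := Nat.ceil_le.mp hm
  have hmN : (m : ℝ) < N := by exact_mod_cast lt_binomLe (m := m) le_rfl
  have hKN : (K : ℝ) ≤ N := hK.trans (by nlinarith [(Nat.cast_nonneg N : (0 : ℝ) ≤ N)])
  have h1 : -Real.log ρ * 2 ≤ N * ε := by
    rw [div_le_iff₀ hε] at hm'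
    nlinarith
  have hpow : (2 : ℝ) ^ K ≤ ρ * 2 ^ N := by
    rw [two_pow_eq_exp, two_pow_eq_exp, ← Real.exp_log hρ, ← Real.exp_add]
    gcongr
    have := Real.log_two_gt_d9
    have h2 : Real.log 2 * K ≤ Real.log 2 * ((1 - ε) * N) := by gcongr
    nlinarith [mul_nonneg (Nat.cast_nonneg N : (0 : ℝ) ≤ N) hε.le]
  rw [← Finset.sum_filter_add_sum_filter_not (polys m 1) fun f => f = 0, add_comm, add_mul,
    one_mul]
  refine add_le_add ?_ ?_
  · have := sum_pow_le_of_bias_le (F := (polys m 1).filter fun f => ¬ f = 0)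
      (Finset.filter_subset _ _) le_rfl hKN fun f hf => bias_nonpos_of_affine
        (mem_polys.mp (Finset.mem_filter.mp hf).1) (Finset.mem_filter.mp hf).2
    simpa using this
  · have h2 : (polys m 1).filter (fun f => f = 0) ⊆ {0} := fun f hf =>
      Finset.mem_singleton.mpr (Finset.mem_filter.mp hf).2
    refine (Finset.sum_le_sum_of_subset_of_nonneg h2
      fun f _ _ => pow_nonneg (one_add_bias_nonneg f) K).trans ?_
    rw [Finset.sum_singleton]
    exact (pow_le_pow_left₀ (one_add_bias_nonneg _) (one_add_bias_le_two _) K).trans hpow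

end MomentBound

end RandomEvaluation

/-- linear independence of evaluation vectors of a random set.
There is an absolute constant `γ₀ > 0` such that for every `ε ∈ (0,1)` and `ρ > 0`
there is `m₀` such that for all `m ≥ m₀` and `1 ≤ r ≤ γ₀ m`, setting
`K = ⌊(1-ε)·binom(m,≤r)⌋`, a uniformly random `K`-element subset
`Z = {z₁,…,z_K} ⊆ F₂^m` satisfies, with probability at least `1 - ρ`, that the
evaluation vectors `z^{(r)}`, `z ∈ Z`, are linearly independent over `F₂`. -/
theorem random_evaluation_vectors_linearIndependent :
    ∃ γ₀ : ℝ, 0 < γ₀ ∧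
      ∀ ε : ℝ, 0 < ε → ε < 1 →
        ∀ ρ : ℝ, 0 < ρ →
          ∃ m₀ : ℕ, ∀ m : ℕ, m₀ ≤ m →
            ∀ r : ℕ, 1 ≤ r → (r : ℝ) ≤ γ₀ * m →
              ∀ K : ℕ, K = ⌊(1 - ε) * (binomLe m r : ℝ)⌋₊ →
                (1 - ρ) *
                    (Nat.card {Z : Finset (Fin m → ZMod 2) // Z.card = K} : ℝ)
                  ≤ (Nat.card {Z : Finset (Fin m → ZMod 2) //
                      Z.card = K ∧
                      LinearIndependent (ZMod 2)
                        (fun z : {x // x ∈ Z} => monVec m r z.1)} : ℝ) := by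
  refine ⟨2⁻¹ ^ 60, by positivity, fun ε hε hε1 ρ hρ => ?_⟩
  obtain ⟨m₁, h₁⟩ := exists_forall_moment_le hε (lt_min hρ one_pos) (min_le_right ρ 1)
  obtain ⟨m₂, h₂⟩ := exists_forall_affine_moment_le hε hρ
  refine ⟨max m₁ m₂, fun m hm r hr1 hr K hK => independent_of_moment ?_⟩
  have hK' : (K : ℝ) ≤ (1 - ε) * binomLe m r := by
    rw [hK]
    exact Nat.floor_le (mul_nonneg (by linarith) (Nat.cast_nonneg _))
  rcases hr1.eq_or_lt with rfl | hr2
  · exact h₂ m ((le_max_right _ _).trans hm) K hK'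
  · refine (h₁ m ((le_max_left _ _).trans hm) r hr2 hr K hK').trans ?_
    gcongr
    exact min_le_left ρ 1
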